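/- arXiv:2605.20338 — 8 statements merged into one kernel-verified Lean document; each statement's English description precedes it below -/
import Mathlib

section
/- Let N = 2M be an even positive integer. Let σ_1,…,σ_N and η_1,…,η_N be complex numbers with ∑_{i=1}^N σ_i = 0, ∑_{i=1}^N η_i = 0, and σ_i − σ_j ∉ ℤ for all i ≠ j. Set Σ_i = exp(2πi·σ_i) (these are pairwise distinct), ζ_i = exp(2πi·η_i), and ρ_i = (N−2i+1)/2. Let V be the N×N Vandermonde matrix V_{ij} = Σ_i^{j−1}, T = diag(ζ_1,…,ζ_N), and E = V^{−1}TV. Then the determinant of the bottom-left M×M submatrix of E (rows N−M+1,…,N, columns 1,…,M) equals ∑_{S ⊆ {1,…,N}, |S| = M} exp(iπ ∑_{i∈S}(2η_i − ρ_i)) · ∏ (2 sin(π(σ_i − σ_j)))^{−1}, where the product runs over all pairs 1 ≤ i < j ≤ N such that exactly one of i, j belongs to S. -/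
open Finset Matrix

def Wm {M : ℕ} (x z w : Fin (M+M) → ℂ) : Matrix (Fin (M+M)) (Fin (M+M)) ℂ :=
  fun i => Fin.append (fun k : Fin M => w i * x i ^ (k:ℕ)) (fun k : Fin M => z i * x i ^ (k:ℕ))

lemma det_block {M : ℕ} (x z : Fin (M+M) → ℂ) (hV : IsUnit (vandermonde x).det)
    (E : Matrix (Fin (M+M)) (Fin (M+M)) ℂ) (hE : vandermonde x * E = diagonal z * vandermonde x) :
    (vandermonde x).det * (E.submatrix (Fin.natAdd M : Fin M → Fin (M+M)) (Fin.castAdd M)).det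
      = (Wm x z 1).det := by
  set e := (finSumFinEquiv : Fin M ⊕ Fin M ≃ Fin (M+M))
  set G : Matrix (Fin M ⊕ Fin M) (Fin M ⊕ Fin M) ℂ :=
    fromBlocks 1 (E.submatrix (Fin.castAdd M) (Fin.castAdd M)) 0
      (E.submatrix (Fin.natAdd M) (Fin.castAdd M)) with hG
  have h1 : (vandermonde x).submatrix e e * G = (Wm x z 1).submatrix e e := by
    ext i j
    rcases j with k | k
    · simp only [Matrix.mul_apply, Fintype.sum_sum_type, hG]
      simp [-Fin.natAdd_eq_addNat, e, Wm, Matrix.one_apply, vandermonde_apply]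
    · have := congrFun (congrFun hE (e i)) (Fin.castAdd M k)
      rw [Matrix.diagonal_mul, Matrix.mul_apply, Fin.sum_univ_add] at this
      simp only [Matrix.mul_apply, Fintype.sum_sum_type, hG]
      simpa [-Fin.natAdd_eq_addNat, e, Wm, vandermonde_apply] using this
  have h2 : G.det = (E.submatrix (Fin.natAdd M : Fin M → Fin (M+M)) (Fin.castAdd M)).det := by
    rw [hG, det_fromBlocks_zero₂₁]; simp
  rw [← h2, ← det_submatrix_equiv_self e (vandermonde x), ← det_mul, h1, det_submatrix_equiv_self]

lemma Wm_expand {M : ℕ} (x z : Fin (M+M) → ℂ) :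
    (Wm x z 1).det = ∑ S : Finset (Fin (M+M)), (∏ i ∈ S, z i) *
      (Wm x (fun i => if i ∈ S then 1 else 0) (fun i => if i ∈ S then 0 else 1)).det := by
  have h0 : Wm x z 1 = (fun i => Wm x z 0 i) + (fun i => Wm x 0 1 i) := by
    ext i j
    refine Fin.addCases (fun k => ?_) (fun k => ?_) j <;> simp [-Fin.natAdd_eq_addNat, Wm]
  have := (Matrix.detRowAlternating (R := ℂ) (n := Fin (M+M))).toMultilinearMap.map_add_univ
    (fun i => Wm x z 0 i) (fun i => Wm x 0 1 i)
  change (Wm x z 1).det = _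
  rw [h0]
  refine this.trans (Finset.sum_congr rfl fun S _ => ?_)
  change Matrix.det _ = _
  have h3 : (∏ i ∈ S, z i) = ∏ i, if i ∈ S then z i else 1 := by simp
  rw [h3, ← Matrix.det_mul_column]
  congr 1
  ext i j
  by_cases hi : i ∈ S <;>
  refine Fin.addCases (fun k => ?_) (fun k => ?_) j <;> simp [-Fin.natAdd_eq_addNat, Wm, hi]

lemma Wm_zero {M : ℕ} (x : Fin (M+M) → ℂ) (S : Finset (Fin (M+M))) (hS : S.card ≠ M) :
      (Wm x (fun i => if i ∈ S then 1 else 0) (fun i => if i ∈ S then 0 else 1)).det = 0 := by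
  rw [det_apply]
  refine Finset.sum_eq_zero fun τ _ => ?_
  suffices h : ∃ i, Wm x (fun i => if i ∈ S then 1 else 0) (fun i => if i ∈ S then 0 else 1) (τ i) i = 0 by
    obtain ⟨i, hi⟩ := h
    have h5 := Finset.prod_eq_zero (f := fun i => Wm x (fun i => if i ∈ S then 1 else 0) (fun i => if i ∈ S then 0 else 1) (τ i) i) (Finset.mem_univ i) hi
    exact (congrArg _ h5).trans (smul_zero _)
  by_contra! h
  apply hS
  have h1 : ∀ k : Fin M, τ (Fin.castAdd M k) ∉ S := fun k hk => h (Fin.castAdd M k) (by simp [-Fin.natAdd_eq_addNat, Wm, hk])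
  have h2 : ∀ k : Fin M, τ (Fin.natAdd M k) ∈ S := fun k => by
    by_contra hk
    exact h (Fin.natAdd M k) (by simp [-Fin.natAdd_eq_addNat, Wm, hk])
  have : S = Finset.univ.map ((Fin.natAddEmb M : Fin M ↪ Fin (M+M)).trans τ.toEmbedding) := by
    ext i
    obtain ⟨j, rfl⟩ := τ.surjective i
    refine Fin.addCases (fun k => ?_) (fun k => ?_) j
    · simp only [h1, false_iff]
      simp [Fin.ext_iff]
      intro a; have := k.isLt; omega
    · simp [-Fin.natAdd_eq_addNat, h2]
  rw [this]; simp

lemma vdm_append {M : ℕ} (u v : Fin M → ℂ) :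
    (vandermonde (Fin.append u v)).det =
      (vandermonde u).det * (vandermonde v).det * ∏ i, ∏ j, (v j - u i) := by
  have key : ∀ (n : ℕ) (w : Fin n → ℂ), (vandermonde w).det =
      ∏ i, ∏ j, if i < j then w j - w i else 1 := by
    intro n w
    rw [det_vandermonde]
    refine Finset.prod_congr rfl fun i _ => ?_
    rw [← Finset.prod_filter]
    congr 1; ext j; simp
  have h1 : ∀ i j : Fin M, Fin.castAdd M i < Fin.natAdd M j := fun i j => by
    rw [Fin.lt_def]; simp; omega
  have h2 : ∀ i j : Fin M, Fin.castAdd M i < Fin.castAdd M j ↔ i < j := fun i j => Iff.rfl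
  rw [key, key, key]
  simp only [Fin.prod_univ_add, Fin.append_left, Fin.append_right, h1, (h1 _ _).not_gt, if_true, if_false,
    Finset.prod_const_one, one_mul, Finset.prod_mul_distrib, Fin.natAdd_lt_natAdd_iff, h2]
  ring

lemma Wm_card {M : ℕ} (x : Fin (M+M) → ℂ) (S : Finset (Fin (M+M))) (hS : S.card = M) :
      (Wm x (fun i => if i ∈ S then 1 else 0) (fun i => if i ∈ S then 0 else 1)).det *
      ∏ i ∈ Sᶜ, ∏ j ∈ S, (x j - x i) = (vandermonde x).det := by
  have hc : Sᶜ.card = M := by rw [Finset.card_compl]; simp [hS]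
  have hcc : Sᶜᶜ.card = M := by simpa using hS
  set π := finSumFinEquiv.symm.trans (finSumEquivOfFinset hc hcc)
  set u : Fin M → Fin (M+M) := fun k => π (Fin.castAdd M k)
  set v : Fin M → Fin (M+M) := fun k => π (Fin.natAdd M k)
  have hu : ∀ k, u k = Sᶜ.orderEmbOfFin hc k := by intro k; simp [u, π]
  have hv : ∀ k, v k = Sᶜᶜ.orderEmbOfFin hcc k := by intro k; simp [-Fin.natAdd_eq_addNat, -compl_compl, v, π]
  have huS : ∀ k, u k ∉ S := fun k => by
    have := Finset.orderEmbOfFin_mem Sᶜ hc k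
    rw [hu]; exact Finset.mem_compl.1 this
  have hvS : ∀ k, v k ∈ S := fun k => by
    have := Finset.orderEmbOfFin_mem Sᶜᶜ hcc k
    rw [hv]; exact (Finset.ext_iff.1 (compl_compl S) _).1 this
  have pu : ∀ f : Fin (M+M) → ℂ, ∏ i ∈ Sᶜ, f i = ∏ k, f (u k) := fun f => by
    rw [← Finset.image_orderEmbOfFin_univ Sᶜ hc, Finset.prod_image ((RelEmbedding.injective _).injOn)]
    simp [hu]
  have pv : ∀ f : Fin (M+M) → ℂ, ∏ i ∈ S, f i = ∏ k, f (v k) := fun f => by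
    conv_lhs => rw [← compl_compl S, ← Finset.image_orderEmbOfFin_univ Sᶜᶜ hcc]
    rw [Finset.prod_image ((RelEmbedding.injective _).injOn)]
    simp [hv]
  have hs : ((Equiv.Perm.sign π : ℤ) : ℂ) ≠ 0 := by
    simp
  apply mul_left_cancel₀ hs
  rw [← mul_assoc, ← det_permute, ← det_permute]
  have e1 : (vandermonde x).submatrix π id = vandermonde (Fin.append (x ∘ u) (x ∘ v)) := by
    ext i j
    refine Fin.addCases (fun k => ?_) (fun k => ?_) i <;> simp [-Fin.natAdd_eq_addNat, vandermonde_apply, u, v]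
  rw [e1, vdm_append, pu]
  simp only [pv, Function.comp]
  congr 1
  rw [← det_submatrix_equiv_self finSumFinEquiv]
  have e2 : (((Wm x (fun i => if i ∈ S then 1 else 0) (fun i => if i ∈ S then 0 else 1)).submatrix π id).submatrix
     finSumFinEquiv finSumFinEquiv) = fromBlocks (vandermonde (x ∘ u)) 0 0 (vandermonde (x ∘ v)) := by
    ext i j
    rcases i with i | i <;> rcases j with j | j
    · have := huS i
      simp only [u] at this
      simp [-Fin.natAdd_eq_addNat, Wm, this, u, v, vandermonde_apply]
    · have := huS i
      simp only [u] at this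
      simp [-Fin.natAdd_eq_addNat, Wm, this, u, v, vandermonde_apply]
    · have := hvS i
      simp only [v] at this
      simp [-Fin.natAdd_eq_addNat, Wm, this, u, v, vandermonde_apply]
    · have := hvS i
      simp only [v] at this
      simp [-Fin.natAdd_eq_addNat, Wm, this, u, v, vandermonde_apply]
  rw [e2, det_fromBlocks_zero₂₁]

lemma factor {N : ℕ} (σ x : Fin N → ℂ)
    (hx : ∀ i, x i = Complex.exp (2 * Real.pi * Complex.I * σ i)) (i j : Fin N) (hij : i ≠ j) :
    (x j - x i)⁻¹ = Complex.exp (-(Real.pi * Complex.I * (σ i + σ j))) *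
      Complex.exp (Real.pi * Complex.I / 2 * (if i < j then 1 else if j < i then -1 else 0)) *
      (if i < j then (2 * Complex.sin ((Real.pi : ℂ) * (σ i - σ j)))⁻¹ else
        (2 * Complex.sin ((Real.pi : ℂ) * (σ j - σ i)))⁻¹) := by
  have key : ∀ a b : ℂ, Complex.exp (2 * Real.pi * Complex.I * b) - Complex.exp (2 * Real.pi * Complex.I * a)
      = Complex.exp (Real.pi * Complex.I * (a + b)) * (-Complex.I) *
        (2 * Complex.sin ((Real.pi : ℂ) * (a - b))) := by
    intro a b
    have e1 : Complex.exp (2 * Real.pi * Complex.I * b) = Complex.exp (Real.pi * Complex.I * (a + b)) *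
      Complex.exp (-(Real.pi * (a - b)) * Complex.I) := by rw [← Complex.exp_add]; congr 1; ring
    have e2 : Complex.exp (2 * Real.pi * Complex.I * a) = Complex.exp (Real.pi * Complex.I * (a + b)) *
      Complex.exp ((Real.pi * (a - b)) * Complex.I) := by rw [← Complex.exp_add]; congr 1; ring
    rw [e1, e2, Complex.sin]
    linear_combination (Complex.exp (Real.pi * Complex.I * (a + b)) * (Complex.exp (-(Real.pi * (a - b)) * Complex.I) - Complex.exp ((Real.pi * (a - b)) * Complex.I))) * Complex.I_sq
  rw [hx, hx]
  rcases lt_or_gt_of_ne hij with h | h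
  · rw [key, mul_inv, mul_inv, ← Complex.exp_neg]
    simp only [h, if_true, mul_one]
    rw [show (Real.pi : ℂ) * Complex.I / 2 = Real.pi / 2 * Complex.I by ring, Complex.exp_pi_div_two_mul_I]
    simp
  · rw [← neg_sub, key, inv_neg, mul_inv, mul_inv]
    simp only [h, h.not_gt, if_true, if_false]
    rw [show (Real.pi : ℂ) * Complex.I / 2 * (-1) = -(Real.pi / 2 * Complex.I) by ring, Complex.exp_neg, Complex.exp_neg, Complex.exp_pi_div_two_mul_I,
      add_comm (σ j)]
    simp

lemma sgn_sum {N : ℕ} (S : Finset (Fin N)) :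
    ∑ i ∈ Sᶜ, ∑ j ∈ S, (if i < j then (1:ℂ) else if j < i then -1 else 0) =
      ∑ j ∈ S, (2 * ((j : ℕ) : ℂ) + 1 - N) := by
  set s : Fin N → Fin N → ℂ := fun i j => if i < j then (1:ℂ) else if j < i then -1 else 0 with hs
  have anti : ∀ i j, s i j = - s j i := by
    intro i j
    rcases lt_trichotomy i j with h | h | h
    · simp [hs, h, h.not_gt]
    · simp [hs, h]
    · simp [hs, h, h.not_gt]
  have h0 : ∑ i ∈ S, ∑ j ∈ S, s i j = 0 := by
    have : ∑ i ∈ S, ∑ j ∈ S, s i j = - ∑ i ∈ S, ∑ j ∈ S, s i j := by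
      conv_lhs => rw [Finset.sum_comm]
      rw [← Finset.sum_neg_distrib]
      refine Finset.sum_congr rfl fun i _ => ?_
      rw [← Finset.sum_neg_distrib]
      exact Finset.sum_congr rfl fun j _ => anti _ _
    exact self_eq_neg.1 this
  have h1 := Finset.sum_add_sum_compl S (fun i => ∑ j ∈ S, s i j)
  rw [h0, zero_add] at h1
  change ∑ i ∈ Sᶜ, ∑ j ∈ S, s i j = _
  rw [h1, Finset.sum_comm]
  refine Finset.sum_congr rfl fun j _ => ?_
  have h2 : ∀ i, s i j = (if i ∈ Finset.Iio j then (1:ℂ) else 0) - (if i ∈ Finset.Ioi j then (1:ℂ) else 0) := by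
    intro i
    rcases lt_trichotomy i j with h | h | h
    · simp [hs, h, h.not_gt]
    · simp [hs, h]
    · simp [hs, h, h.not_gt]
  simp only [h2, Finset.sum_sub_distrib, Finset.sum_ite_mem, Finset.univ_inter, Finset.sum_const, Fin.card_Iio, Fin.card_Ioi]
  have := j.isLt
  rw [nsmul_one, nsmul_one, Nat.sub_sub, Nat.cast_sub (by omega)]
  push_cast; ring

lemma prod_pairs {N : ℕ} (S : Finset (Fin N)) (f : Fin N → Fin N → ℂ) :
    ∏ i ∈ Sᶜ, ∏ j ∈ S, (if i < j then f i j else f j i) =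
    ∏ p ∈ (Finset.univ ×ˢ Finset.univ).filter
            (fun p : Fin N × Fin N => p.1 < p.2 ∧ ¬((p.1 ∈ S) ↔ (p.2 ∈ S))), f p.1 p.2 := by
  rw [← Finset.prod_product']
  refine Finset.prod_bij' (fun p _ => if p.1 < p.2 then p else p.swap)
    (fun p _ => if p.2 ∈ S then p else p.swap) ?_ ?_ ?_ ?_ ?_
  · rintro ⟨a, b⟩ h
    simp only [Finset.mem_product, Finset.mem_compl] at h
    have : a ≠ b := by rintro rfl; exact h.1 h.2
    by_cases hab : a < b
    · simp [hab, h]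
    · simp [hab, h, lt_of_le_of_ne (not_lt.1 hab) this.symm]
  · rintro ⟨a, b⟩ h
    simp only [Finset.mem_filter] at h
    by_cases hb : b ∈ S
    · have : a ∉ S := by tauto
      simp [hb, this]
    · have : a ∈ S := by tauto
      simp [hb, this]
  · rintro ⟨a, b⟩ h
    simp only [Finset.mem_product, Finset.mem_compl] at h
    by_cases hab : a < b <;> simp [hab, h]
  · rintro ⟨a, b⟩ h
    simp only [Finset.mem_filter] at h
    by_cases hb : b ∈ S <;> simp [hb, h, h.2.1.not_gt]
  · rintro ⟨a, b⟩ h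
    by_cases hab : a < b <;> simp [hab]

lemma term_eq {M : ℕ} (σ η x z : Fin (M+M) → ℂ) (hσ0 : ∑ i, σ i = 0)
    (hx : ∀ i, x i = Complex.exp (2 * Real.pi * Complex.I * σ i))
    (hz : ∀ i, z i = Complex.exp (2 * Real.pi * Complex.I * η i))
    (S : Finset (Fin (M+M))) (hS : S.card = M) :
    (∏ i ∈ S, z i) * (∏ i ∈ Sᶜ, ∏ j ∈ S, (x j - x i))⁻¹ =
      Complex.exp (Real.pi * Complex.I *
          ∑ i ∈ S, (2 * η i - (((M+M : ℕ) : ℂ) - 2 * ((i : ℕ) : ℂ) - 1) / 2)) *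
        ∏ p ∈ (Finset.univ ×ˢ Finset.univ).filter
            (fun p : Fin (M+M) × Fin (M+M) => p.1 < p.2 ∧ ¬((p.1 ∈ S) ↔ (p.2 ∈ S))),
          (2 * Complex.sin ((Real.pi : ℂ) * (σ p.1 - σ p.2)))⁻¹ := by
  have hc : Sᶜ.card = M := by rw [Finset.card_compl]; simp [hS]
  rw [← prod_pairs S (fun i j => (2 * Complex.sin ((Real.pi : ℂ) * (σ i - σ j)))⁻¹)]
  have h1 : (∏ i ∈ Sᶜ, ∏ j ∈ S, (x j - x i))⁻¹ = ∏ i ∈ Sᶜ, ∏ j ∈ S, (x j - x i)⁻¹ := by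
    simp only [Finset.prod_inv_distrib]
  have h2 : ∏ i ∈ Sᶜ, ∏ j ∈ S, (x j - x i)⁻¹ = ∏ i ∈ Sᶜ, ∏ j ∈ S, _ :=
    Finset.prod_congr rfl fun i hi => Finset.prod_congr rfl fun j hj =>
      factor σ x hx i j (by rintro rfl; exact Finset.mem_compl.1 hi hj)
  rw [h1, h2]
  simp only [Finset.prod_mul_distrib, ← Complex.exp_sum]
  rw [← mul_assoc]
  congr 1
  simp only [hz, ← Complex.exp_sum, ← Finset.mul_sum, Finset.sum_neg_distrib]
  rw [sgn_sum, ← Complex.exp_add, ← Complex.exp_add]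
  congr 1
  have h3 : ∑ i ∈ Sᶜ, ∑ j ∈ S, (σ i + σ j) = 0 := by
    simp only [Finset.sum_add_distrib, Finset.sum_const, hS, hc, ← Finset.smul_sum]
    rw [← smul_add, add_comm, Finset.sum_add_sum_compl, hσ0, smul_zero]
  have h4 : ∑ i ∈ S, (2 * η i - (((M+M : ℕ) : ℂ) - 2 * ((i : ℕ) : ℂ) - 1) / 2) =
      2 * ∑ i ∈ S, η i + (1/2) * ∑ i ∈ S, (2 * ((i : ℕ) : ℂ) + 1 - ((M+M : ℕ) : ℂ)) := by
    rw [Finset.mul_sum, Finset.mul_sum, ← Finset.sum_add_distrib]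
    exact Finset.sum_congr rfl fun i _ => by ring
  rw [h3, h4]
  ring

/-- N even: the determinant of the bottom-left M×M submatrix of
E = V⁻¹ T V equals
∑_{S ⊆ {1,…,N}, |S| = M} exp(iπ ∑_{i∈S}(2ηᵢ − ρᵢ)) ∏ (2 sin(π(σᵢ − σⱼ)))⁻¹,
the product over pairs i < j with exactly one of i, j in S. -/
theorem bottomLeft_minor_even_quantization
    (N M : ℕ) (hM : 1 ≤ M) (hNM : N = 2 * M)
    (σ η : Fin N → ℂ)
    (hσ0 : ∑ i, σ i = 0) (hη0 : ∑ i, η i = 0)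
    (hnonint : ∀ i j : Fin N, i ≠ j → ∀ n : ℤ, σ i - σ j ≠ (n : ℂ))
    (Sg ζ : Fin N → ℂ)
    (hSg : ∀ i, Sg i = Complex.exp (2 * Real.pi * Complex.I * σ i))
    (hζ : ∀ i, ζ i = Complex.exp (2 * Real.pi * Complex.I * η i)) :
    ((((Matrix.vandermonde Sg)⁻¹ * Matrix.diagonal ζ * Matrix.vandermonde Sg).submatrix
        (fun i : Fin M => (⟨N - M + i.val, by have := i.isLt; omega⟩ : Fin N))
        (Fin.castLE (by omega : M ≤ N))).det)
      =
    ∑ S ∈ Finset.powersetCard M (Finset.univ : Finset (Fin N)),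
      Complex.exp (Real.pi * Complex.I *
          ∑ i ∈ S, (2 * η i - ((N : ℂ) - 2 * ((i : ℕ) : ℂ) - 1) / 2)) *
        ∏ p ∈ (Finset.univ ×ˢ Finset.univ).filter
            (fun p : Fin N × Fin N => p.1 < p.2 ∧ ¬((p.1 ∈ S) ↔ (p.2 ∈ S))),
          (2 * Complex.sin ((Real.pi : ℂ) * (σ p.1 - σ p.2)))⁻¹ := by
  obtain rfl : N = M + M := by omega
  have hinj : Function.Injective Sg := by
    intro i j hij
    by_contra hne
    rw [hSg, hSg, Complex.exp_eq_exp_iff_exists_int] at hij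
    obtain ⟨n, hn⟩ := hij
    apply hnonint i j hne n
    have h2 : (2 * Real.pi * Complex.I : ℂ) ≠ 0 := Complex.two_pi_I_ne_zero
    apply mul_left_cancel₀ h2
    linear_combination hn
  have hV : (vandermonde Sg).det ≠ 0 := det_vandermonde_ne_zero_iff.2 hinj
  have hVu : IsUnit (vandermonde Sg).det := hV.isUnit
  have hB := det_block Sg ζ hVu ((vandermonde Sg)⁻¹ * diagonal ζ * vandermonde Sg) (by
    rw [← mul_assoc, ← mul_assoc, mul_nonsing_inv _ hVu, one_mul])
  have hrow : (fun i : Fin M => (⟨M + M - M + i.val, by have := i.isLt; omega⟩ : Fin (M + M))) =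
      Fin.natAdd M := by
    funext i; ext; simp; omega
  rw [hrow]
  apply mul_left_cancel₀ hV
  refine hB.trans ?_
  rw [Wm_expand, Finset.mul_sum]
  rw [← Finset.sum_subset (Finset.subset_univ (Finset.powersetCard M (Finset.univ : Finset (Fin (M+M)))))]
  · refine Finset.sum_congr rfl fun S hS => ?_
    have hS' : S.card = M := (Finset.mem_powersetCard.1 hS).2
    rw [← term_eq σ η Sg ζ hσ0 hSg hζ S hS', ← Wm_card Sg S hS']
    have hne : ∏ i ∈ Sᶜ, ∏ j ∈ S, (Sg j - Sg i) ≠ 0 := by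
      refine Finset.prod_ne_zero_iff.2 fun i hi => Finset.prod_ne_zero_iff.2 fun j hj => ?_
      rw [sub_ne_zero]
      intro h
      exact Finset.mem_compl.1 hi (hinj h ▸ hj)
    field_simp
  · intro S _ hS
    rw [Wm_zero, mul_zero]
    intro h
    exact hS (Finset.mem_powersetCard.2 ⟨Finset.subset_univ _, h⟩)
end

section
/- Let N = 2M−1 be an odd positive integer (so M = (N+1)/2). Let σ_1,…,σ_N and η_1,…,η_N be complex numbers with ∑_{i=1}^N σ_i = 0, ∑_{i=1}^N η_i = 0, and σ_i − σ_j ∉ ℤ for all i ≠ j. Set Σ_i = exp(2πi·σ_i) (pairwise distinct), ζ_i = exp(2πi·η_i), and ρ_i = (N−2i+1)/2. Let V be the N×N Vandermonde matrix V_{ij} = Σ_i^{j−1}, T = diag(ζ_1,…,ζ_N), and E = V^{−1}TV. Then the determinant of the bottom-left M×M submatrix of E (rows N−M+1,…,N, columns 1,…,M) equals ∑_{S ⊆ {1,…,N}, |S| = M} exp(iπ ∑_{i∈S}(2η_i − ρ_i + σ_i)) · ∏ (2 sin(π(σ_i − σ_j)))^{−1}, where the product runs over all pairs 1 ≤ i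 < j ≤ N such that exactly one of i, j belongs to S. -/
open Finset Matrix

lemma aux_vdm (k M : ℕ) (w : Fin (k+M) → ℂ) :
    (vandermonde w).det = (vandermonde (fun i : Fin k => w (Fin.castAdd M i))).det *
      (vandermonde (fun i : Fin M => w (Fin.natAdd k i))).det *
      ∏ i : Fin k, ∏ j : Fin M, (w (Fin.natAdd k j) - w (Fin.castAdd M i)) := by
  have key : ∀ (n : ℕ) (u : Fin n → ℂ), (vandermonde u).det =
      ∏ i, ∏ j, if i < j then u j - u i else 1 := by
    intro n u
    rw [det_vandermonde]
    refine Finset.prod_congr rfl fun i _ => ?_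
    rw [← Finset.prod_filter]
    congr 1
    ext; simp
  rw [key, key, key, Fin.prod_univ_add]
  simp only [Fin.prod_univ_add]
  have h1 : ∀ (i : Fin k) (j : Fin M), Fin.castAdd M i < Fin.natAdd k j := by
    intro i j; rw [Fin.lt_def, Fin.val_natAdd, Fin.val_castAdd]; omega
  have h2 : ∀ (i : Fin k) (j : Fin M), ¬ Fin.natAdd k j < Fin.castAdd M i := by
    intro i j; rw [Fin.lt_def, Fin.val_natAdd, Fin.val_castAdd]; omega
  have h3 : ∀ (i j : Fin k), (Fin.castAdd M i < Fin.castAdd M j ↔ i < j) := by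
    intro i j; rw [Fin.lt_def, Fin.lt_def]; simp
  have h4 : ∀ (i j : Fin M), (Fin.natAdd k i < Fin.natAdd k j ↔ i < j) := by
    intro i j; rw [Fin.lt_def, Fin.lt_def]; simp
  simp only [h1, h2, h3, h4, if_true, if_false, Finset.prod_const_one, one_mul,
    Finset.prod_mul_distrib]
  ring

/-- rows in S use the right block, other rows the left block -/
noncomputable def auxB (k M : ℕ) (v : Fin (k+M) → ℂ) (S : Finset (Fin (k+M))) :
    Matrix (Fin (k+M)) (Fin (k+M)) ℂ :=
  fun i j => Fin.addCases (motive := fun _ => ℂ) (fun a : Fin k => if i ∈ S then 0 else v i ^ (a:ℕ))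
    (fun b : Fin M => if i ∈ S then v i ^ (b:ℕ) else 0) j

lemma auxB_zero (k M : ℕ) (v : Fin (k+M) → ℂ) (S : Finset (Fin (k+M))) (hS : S.card ≠ M) :
    (auxB k M v S).det = 0 := by
  rw [det_apply]
  refine Finset.sum_eq_zero fun τ _ => ?_
  by_contra hne
  have hp : ∏ i, auxB k M v S (τ i) i ≠ 0 := fun h => hne (by rw [h, smul_zero])
  rw [Finset.prod_ne_zero_iff] at hp
  apply hS
  have : S = Finset.univ.map ((Fin.natAddEmb k : Fin M ↪ Fin (k+M)).trans τ.toEmbedding) := by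
    ext x
    obtain ⟨j, rfl⟩ := τ.surjective x
    have hj := hp j (mem_univ _)
    induction j using Fin.addCases with
    | left a =>
      simp only [auxB, Fin.addCases_left] at hj
      have h0 : τ (Fin.castAdd M a) ∉ S := fun h => hj (by simp [h])
      simp only [h0, false_iff, Finset.mem_map, mem_univ, true_and, not_exists]
      intro b hb
      have := τ.injective hb
      simp [Fin.ext_iff] at this
      omega
    | right b =>
      simp only [auxB, Fin.addCases_right] at hj
      have h0 : τ (Fin.natAdd k b) ∈ S := by
        by_contra h; exact hj (by simp [h])
      simp [h0]
  rw [this]; simp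

lemma exists_perm (k M : ℕ) (S : Finset (Fin (k+M))) (hS : S.card = M) :
    ∃ e : Equiv.Perm (Fin (k+M)), (∀ a, e (Fin.castAdd M a) ∉ S) ∧ ∀ b, e (Fin.natAdd k b) ∈ S := by
  have hc : Sᶜ.card = k := by rw [card_compl]; simp [hS]
  let e1 := Sᶜ.equivFinOfCardEq hc
  let e2 := S.equivFinOfCardEq hS
  let f : Fin (k+M) → Fin (k+M) := Fin.addCases (fun a => (e1.symm a : Fin (k+M))) (fun b => (e2.symm b : Fin (k+M)))
  have f1 : ∀ a, f (Fin.castAdd M a) = e1.symm a := fun a => by simp [f]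
  have f2 : ∀ a, f (Fin.natAdd k a) = e2.symm a := fun a => by simp [f]
  have m1 : ∀ a, (e1.symm a : Fin (k+M)) ∉ S := fun a => by
    exact mem_compl.mp (e1.symm a).2
  have m2 : ∀ a, (e2.symm a : Fin (k+M)) ∈ S := fun a => (e2.symm a).2
  have hs : Function.Surjective f := by
    intro x
    by_cases hx : x ∈ S
    · exact ⟨Fin.natAdd k (e2 ⟨x, hx⟩), by rw [f2]; simp⟩
    · exact ⟨Fin.castAdd M (e1 ⟨x, by simpa using hx⟩), by rw [f1]; simp⟩
  refine ⟨Equiv.ofBijective f (Finite.surjective_iff_bijective.mp hs), ?_, ?_⟩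
  · intro a; simpa [f1] using m1 a
  · intro a; simpa [f2] using m2 a

lemma auxB_det (k M : ℕ) (v : Fin (k+M) → ℂ) (S : Finset (Fin (k+M))) (hS : S.card = M) :
    (auxB k M v S).det * ∏ i ∈ Sᶜ, ∏ j ∈ S, (v j - v i) = (vandermonde v).det := by
  obtain ⟨e, he1, he2⟩ := exists_perm k M S hS
  have hB : ((auxB k M v S).submatrix e id).det =
      (vandermonde (fun i : Fin k => v (e (Fin.castAdd M i)))).det *
      (vandermonde (fun i : Fin M => v (e (Fin.natAdd k i)))).det := by
    rw [← det_submatrix_equiv_self finSumFinEquiv, ← det_fromBlocks_zero₁₂ _ 0]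
    congr 1
    ext i j
    rcases i with i | i <;> rcases j with j | j <;> simp [auxB, he1, he2, vandermonde]
  have hV : ((vandermonde v).submatrix e id).det = _ := aux_vdm k M (fun i => v (e i))
  have hP : ∏ i ∈ Sᶜ, ∏ j ∈ S, (v j - v i) =
    ∏ i : Fin k, ∏ j : Fin M, (v (e (Fin.natAdd k j)) - v (e (Fin.castAdd M i))) := by
    have hSm : S = Finset.univ.map ((Fin.natAddEmb k : Fin M ↪ Fin (k+M)).trans e.toEmbedding) := by
      symm
      apply Finset.eq_of_subset_of_card_le
      · intro x; simp only [Finset.mem_map]; rintro ⟨b, -, rfl⟩; exact he2 b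
      · simp [hS]
    have hSc : Sᶜ = Finset.univ.map ((Fin.castAddEmb M : Fin k ↪ Fin (k+M)).trans e.toEmbedding) := by
      symm
      apply Finset.eq_of_subset_of_card_le
      · intro x; simp only [Finset.mem_map, mem_compl]; rintro ⟨b, -, rfl⟩; exact he1 b
      · simp [hS, card_compl]
    rw [hSc, Finset.prod_map]
    refine Finset.prod_congr rfl fun i _ => ?_
    conv_lhs => rw [hSm, Finset.prod_map]
    rfl
  rw [det_permute] at hB hV
  rw [hP]
  rw [← hB] at hV
  have hsg : ((Equiv.Perm.sign e : ℤ) : ℂ) ≠ 0 := by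
    simp
  apply mul_left_cancel₀ hsg
  rw [hV]; ring

lemma aux_minor (k M : ℕ) (v ζ : Fin (k+M) → ℂ) (hv : Function.Injective v) :
    (((vandermonde v)⁻¹ * diagonal ζ * vandermonde v).submatrix
      (Fin.natAdd k : Fin M → Fin (k+M)) (fun j : Fin M => (⟨j, by omega⟩ : Fin (k+M)))).det =
    ∑ S ∈ Finset.powersetCard M (Finset.univ : Finset (Fin (k+M))),
      (∏ i ∈ S, ζ i) * ∏ i ∈ Sᶜ, ∏ j ∈ S, (v j - v i)⁻¹ := by
  have hV : (vandermonde v).det ≠ 0 := det_vandermonde_ne_zero_iff.mpr hv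
  set E := (vandermonde v)⁻¹ * diagonal ζ * vandermonde v with hE
  have hVE : vandermonde v * E = diagonal ζ * vandermonde v := by
    rw [hE, Matrix.mul_assoc, ← Matrix.mul_assoc, Matrix.mul_nonsing_inv _ hV.isUnit, Matrix.one_mul]
  let F : Matrix (Fin (k+M)) (Fin (k+M)) ℂ := fun i j =>
    Fin.addCases (motive := fun _ => ℂ) (fun a : Fin k => if i = Fin.castAdd M a then 1 else 0)
      (fun b : Fin M => E i ⟨b, by omega⟩) j
  have hFl : ∀ i a, F i (Fin.castAdd M a) = if i = Fin.castAdd M a then 1 else 0 := by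
    intro i a; simp [F]
  have hFr : ∀ i b, F i (Fin.natAdd k b) = E i ⟨b, by omega⟩ := by
    intro i b; simp [F]
  clear_value F
  have hF : F.det = (E.submatrix (Fin.natAdd k : Fin M → Fin (k+M))
      (fun j : Fin M => (⟨j, by omega⟩ : Fin (k+M)))).det := by
    rw [← det_submatrix_equiv_self finSumFinEquiv, ← one_mul (det (E.submatrix _ _)),
      ← det_one (n := Fin k), ← det_fromBlocks_zero₂₁ _
        (E.submatrix (Fin.castAdd M : Fin k → Fin (k+M)) (fun j : Fin M => (⟨j, by omega⟩ : Fin (k+M))))]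
    congr 1
    ext i j
    rcases i with i | i <;> rcases j with j | j
    · simp [hFl, Matrix.one_apply, Fin.ext_iff]
    · simp [hFr]
    · have : Fin.natAdd k i ≠ Fin.castAdd M j := by
        intro h; have := congrArg Fin.val h
        rw [Fin.val_natAdd, Fin.val_castAdd] at this; omega
      simp [hFl, this]
    · simp [hFr]
  let R0 : Fin (k+M) → Fin (k+M) → ℂ := fun i j =>
    Fin.addCases (motive := fun _ => ℂ) (fun a : Fin k => v i ^ (a:ℕ)) (fun b : Fin M => 0) j
  let R1 : Fin (k+M) → Fin (k+M) → ℂ := fun i j =>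
    Fin.addCases (motive := fun _ => ℂ) (fun a : Fin k => 0) (fun b : Fin M => v i ^ (b:ℕ)) j
  have hVF : vandermonde v * F = Matrix.of ((fun i => ζ i • R1 i) + R0) := by
    ext i j
    induction j using Fin.addCases with
    | left a => rw [Matrix.mul_apply]; simp [hFl, R0, R1, vandermonde]
    | right b =>
      have := congrFun (congrFun hVE i) ⟨b, by omega⟩
      rw [Matrix.mul_apply, diagonal_mul] at this
      rw [Matrix.mul_apply]; simp only [hFr, this]
      simp [R0, R1, vandermonde]
  have hdet : (vandermonde v).det * F.det =
      ∑ S : Finset (Fin (k+M)), (∏ i ∈ S, ζ i) * (auxB k M v S).det := by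
    rw [← det_mul, hVF]
    have := (detRowAlternating (n := Fin (k+M)) (R := ℂ)).toMultilinearMap.map_add_univ
      (fun i => ζ i • R1 i) R0
    refine this.trans (Finset.sum_congr rfl fun S _ => ?_)
    have h2 : S.piecewise (fun i => ζ i • R1 i) R0 =
        fun i j => (if i ∈ S then ζ i else 1) * auxB k M v S i j := by
      funext i j
      by_cases hi : i ∈ S <;> induction j using Fin.addCases <;> simp [hi, auxB, R0, R1]
    rw [h2]
    refine (det_mul_column (fun i => if i ∈ S then ζ i else 1) (auxB k M v S)).trans ?_
    simp [Finset.prod_ite_mem]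
  rw [← hF]
  apply mul_left_cancel₀ hV
  rw [hdet, Finset.mul_sum]
  symm
  apply Finset.sum_subset_zero_on_sdiff (Finset.subset_univ _)
  · intro S hS
    rw [auxB_zero, mul_zero]
    simpa [mem_powersetCard] using hS
  · intro S hS
    have hc := (mem_powersetCard.mp hS).2
    rw [← auxB_det k M v S hc]
    simp only [Finset.prod_inv_distrib]
    have : ∏ i ∈ Sᶜ, ∏ j ∈ S, (v j - v i) ≠ 0 := by
      rw [Finset.prod_ne_zero_iff]; intro i hi
      rw [Finset.prod_ne_zero_iff]; intro j hj h
      have := hv (sub_eq_zero.mp h)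
      subst this
      simp at hi; exact hi hj
    field_simp

lemma aux_count (n : ℕ) (S : Finset (Fin n)) :
    2 * (∑ i ∈ Sᶜ, ∑ j ∈ S, if i < j then 1 else 0) + S.card * S.card =
      2 * (∑ j ∈ S, (j : ℕ)) + S.card := by
  have h1 : ∀ j : Fin n, (j : ℕ) = ∑ i ∈ Sᶜ, (if i < j then 1 else 0) + ∑ i ∈ S, (if i < j then 1 else 0) := by
    intro j
    rw [Finset.sum_compl_add_sum, ← Finset.sum_filter, ← Finset.card_eq_sum_ones]
    have : ({i | i < j} : Finset (Fin n)) = Finset.Iio j := by ext; simp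
    rw [this, Fin.card_Iio]
  have h2 : ∑ j ∈ S, ∑ i ∈ S, ((if i < j then 1 else 0) + (if j < i then 1 else 0) + (if i = j then 1 else 0)) = S.card * S.card := by
    rw [← smul_eq_mul, ← Finset.sum_const]
    refine Finset.sum_congr rfl fun j _ => ?_
    rw [Finset.card_eq_sum_ones]
    refine Finset.sum_congr rfl fun i _ => ?_
    rcases lt_trichotomy i j with h | h | h
    · simp [h, h.ne, h.not_gt]
    · simp [h]
    · simp [h, h.ne', h.not_gt]
  simp only [Finset.sum_add_distrib] at h2
  have h3 : ∑ j ∈ S, ∑ i ∈ S, (if j < i then 1 else 0) = ∑ j ∈ S, ∑ i ∈ S, (if i < j then 1 else 0) :=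
    Finset.sum_comm
  have h4 : ∑ j ∈ S, ∑ i ∈ S, (if i = j then 1 else 0) = S.card := by
    rw [Finset.card_eq_sum_ones]
    refine Finset.sum_congr rfl fun j hj => ?_
    simp [hj]
  have h5 : ∑ j ∈ S, (j : ℕ) = ∑ i ∈ Sᶜ, ∑ j ∈ S, (if i < j then 1 else 0) + ∑ j ∈ S, ∑ i ∈ S, (if i < j then 1 else 0) := by
    rw [Finset.sum_comm (s := Sᶜ), ← Finset.sum_add_distrib]
    exact Finset.sum_congr rfl fun j _ => h1 j
  rw [h3, h4] at h2
  omega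

lemma aux_pairs (n : ℕ) (S : Finset (Fin n)) (f : Fin n → Fin n → ℂ) :
    ∏ p ∈ (Finset.univ ×ˢ Finset.univ).filter
            (fun p : Fin n × Fin n => p.1 < p.2 ∧ ¬((p.1 ∈ S) ↔ (p.2 ∈ S))), f p.1 p.2 =
    ∏ i ∈ Sᶜ, ∏ j ∈ S, if i < j then f i j else f j i := by
  rw [← Finset.prod_product']
  refine Finset.prod_bij' (fun p _ => if p.1 ∈ S then p.swap else p)
    (fun q _ => if q.1 < q.2 then q else q.swap) ?_ ?_ ?_ ?_ ?_
  · rintro ⟨i, j⟩ h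
    simp only [mem_filter, mem_product, mem_univ, true_and] at h
    by_cases hi : i ∈ S <;> simp_all
  · rintro ⟨i, j⟩ h
    simp only [mem_product, mem_compl] at h
    have hne : i ≠ j := by rintro rfl; exact h.1 h.2
    rcases lt_or_gt_of_ne hne with h' | h'
    · simp_all
    · simp_all [h'.not_gt]
  · rintro ⟨i, j⟩ h
    simp only [mem_filter, mem_product, mem_univ, true_and] at h
    by_cases hi : i ∈ S
    · simp [hi, h.1.not_gt]
    · simp [hi, h.1]
  · rintro ⟨i, j⟩ h
    simp only [mem_product, mem_compl] at h
    by_cases h' : i < j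
    · simp [h', h]
    · simp [h', h]
  · rintro ⟨i, j⟩ h
    simp only [mem_filter, mem_product, mem_univ, true_and] at h
    by_cases hi : i ∈ S
    · simp [hi, h.1.not_gt]
    · simp [hi, h.1]

lemma aux_sub (a b : ℂ) : (Complex.exp (2 * Real.pi * Complex.I * b) - Complex.exp (2 * Real.pi * Complex.I * a))⁻¹ =
    Complex.exp (-(Real.pi * Complex.I * (a + b))) * (-Complex.I) * (2 * Complex.sin (Real.pi * (b - a)))⁻¹ := by
  have h : Complex.exp (2 * Real.pi * Complex.I * b) - Complex.exp (2 * Real.pi * Complex.I * a) =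
      Complex.exp (Real.pi * Complex.I * (a + b)) * Complex.I * (2 * Complex.sin (Real.pi * (b - a))) := by
    have e1 : Complex.exp (2 * Real.pi * Complex.I * b) = Complex.exp (Real.pi * Complex.I * (a + b)) *
      Complex.exp (Real.pi * (b - a) * Complex.I) := by rw [← Complex.exp_add]; ring_nf
    have e2 : Complex.exp (2 * Real.pi * Complex.I * a) = Complex.exp (Real.pi * Complex.I * (a + b)) *
      Complex.exp (-(Real.pi * (b - a)) * Complex.I) := by rw [← Complex.exp_add]; ring_nf
    rw [e1, e2, Complex.sin]
    linear_combination (-Complex.exp (Real.pi * Complex.I * (a + b)) * (Complex.exp (-(Real.pi * (b - a)) * Complex.I) - Complex.exp ((Real.pi * (b - a)) * Complex.I))) * Complex.I_sq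
  rw [h, mul_inv, mul_inv, ← Complex.exp_neg, Complex.inv_I]

theorem bottomLeft_minor_odd_quantization
    (N M : ℕ) (hM : 1 ≤ M) (hNM : N + 1 = 2 * M)
    (σ η : Fin N → ℂ)
    (hσ0 : ∑ i, σ i = 0) (hη0 : ∑ i, η i = 0)
    (hnonint : ∀ i j : Fin N, i ≠ j → ∀ n : ℤ, σ i - σ j ≠ (n : ℂ))
    (Sg ζ : Fin N → ℂ)
    (hSg : ∀ i, Sg i = Complex.exp (2 * Real.pi * Complex.I * σ i))
    (hζ : ∀ i, ζ i = Complex.exp (2 * Real.pi * Complex.I * η i)) :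
    ((((Matrix.vandermonde Sg)⁻¹ * Matrix.diagonal ζ * Matrix.vandermonde Sg).submatrix
        (fun i : Fin M => (⟨N - M + i.val, by have := i.isLt; omega⟩ : Fin N))
        (Fin.castLE (by omega : M ≤ N))).det)
      =
    ∑ S ∈ Finset.powersetCard M (Finset.univ : Finset (Fin N)),
      Complex.exp (Real.pi * Complex.I *
          ∑ i ∈ S, (2 * η i - ((N : ℂ) - 2 * ((i : ℕ) : ℂ) - 1) / 2 + σ i)) *
        ∏ p ∈ (Finset.univ ×ˢ Finset.univ).filter
            (fun p : Fin N × Fin N => p.1 < p.2 ∧ ¬((p.1 ∈ S) ↔ (p.2 ∈ S))),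
          (2 * Complex.sin ((Real.pi : ℂ) * (σ p.1 - σ p.2)))⁻¹ := by
  obtain ⟨k, rfl⟩ : ∃ k, M = k + 1 := ⟨M - 1, by omega⟩
  obtain rfl : N = k + (k + 1) := by omega
  have hinj : Function.Injective Sg := by
    intro i j hij
    by_contra hne
    rw [hSg, hSg, Complex.exp_eq_exp_iff_exists_int] at hij
    obtain ⟨n, hn⟩ := hij
    apply hnonint i j hne n
    have h2 : (2 * Real.pi * Complex.I : ℂ) ≠ 0 := Complex.two_pi_I_ne_zero
    apply mul_left_cancel₀ h2
    linear_combination hn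
  have hrow : (fun i : Fin (k+1) => (⟨k + (k+1) - (k+1) + i.val, by have := i.isLt; omega⟩ : Fin (k + (k+1)))) = Fin.natAdd k := by
    funext i; ext; simp
  rw [hrow]
  refine (aux_minor k (k+1) Sg ζ hinj).trans (Finset.sum_congr rfl fun S hS => ?_)
  have hc := (mem_powersetCard.mp hS).2
  have hcc : Sᶜ.card = k := by rw [card_compl]; simp [hc]
  rw [aux_pairs _ S (fun a b => (2 * Complex.sin ((Real.pi : ℂ) * (σ a - σ b)))⁻¹)]
  have hpt : ∀ i j, (Sg j - Sg i)⁻¹ = Complex.exp (-(Real.pi * Complex.I * (σ i + σ j))) *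
      (-Complex.I) ^ (1 + 2 * (if i < j then 1 else 0)) *
      (if i < j then (2 * Complex.sin ((Real.pi : ℂ) * (σ i - σ j)))⁻¹ else
        (2 * Complex.sin ((Real.pi : ℂ) * (σ j - σ i)))⁻¹) := by
    intro i j
    rw [hSg, hSg, aux_sub]
    split_ifs
    · have : (Real.pi : ℂ) * (σ j - σ i) = -(Real.pi * (σ i - σ j)) := by ring
      rw [this, Complex.sin_neg, mul_neg (2 : ℂ), inv_neg]
      have : (-Complex.I) ^ (1 + 2 * 1) = Complex.I := by
        rw [pow_succ, pow_succ, pow_one]; simp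
      rw [this]; ring
    · simp
  simp only [hpt, Finset.prod_mul_distrib, Finset.prod_pow_eq_pow_sum]
  rw [← mul_assoc]
  congr 1
  have hI : ∑ i ∈ Sᶜ, ∑ j ∈ S, (1 + 2 * (if i < j then 1 else 0)) = 2 * ∑ j ∈ S, (j : ℕ) := by
    have := aux_count _ S
    simp only [Finset.sum_add_distrib, ← Finset.mul_sum, Finset.sum_const, hc, hcc, smul_eq_mul] at this ⊢
    nlinarith
  rw [hI, pow_mul, neg_sq, Complex.I_sq]
  have hη : ∏ i ∈ S, ζ i = Complex.exp (Real.pi * Complex.I * ∑ i ∈ S, 2 * η i) := by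
    rw [Finset.mul_sum, Complex.exp_sum]
    refine Finset.prod_congr rfl fun i _ => ?_
    rw [hζ]; ring_nf
  have hs : ∏ i ∈ Sᶜ, ∏ j ∈ S, Complex.exp (-(Real.pi * Complex.I * (σ i + σ j))) =
      Complex.exp (Real.pi * Complex.I * ∑ i ∈ S, σ i) := by
    simp only [← Complex.exp_sum]
    congr 1
    have h0 : ∑ i ∈ Sᶜ, σ i = - ∑ i ∈ S, σ i := by
      rw [← Finset.sum_compl_add_sum S] at hσ0
      linear_combination hσ0
    simp only [Finset.sum_neg_distrib, ← Finset.mul_sum, Finset.sum_add_distrib, Finset.sum_const, hc, hcc, nsmul_eq_mul, h0]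
    push_cast
    ring
  have hsum : ∑ i ∈ S, (2 * η i - (((k + (k+1) : ℕ) : ℂ) - 2 * ((i : ℕ) : ℂ) - 1) / 2 + σ i) =
      ∑ i ∈ S, 2 * η i + ∑ i ∈ S, σ i + ((∑ j ∈ S, (j : ℕ) : ℕ) : ℂ) - k * (k + 1) := by
    have : ∀ i : Fin (k + (k+1)), (2 * η i - (((k + (k+1) : ℕ) : ℂ) - 2 * ((i : ℕ) : ℂ) - 1) / 2 + σ i) =
      2 * η i + σ i + ((i : ℕ) : ℂ) - k := by intro i; push_cast; ring
    simp only [this, Finset.sum_add_distrib, Finset.sum_sub_distrib, Finset.sum_const, hc, nsmul_eq_mul]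
    push_cast; ring
  rw [hη, hs, hsum]
  obtain ⟨q, hq⟩ := Nat.even_mul_succ_self k
  have hq' : (k : ℂ) * (k + 1) = q + q := by exact_mod_cast hq
  have hpow : ((-1 : ℂ)) ^ (∑ j ∈ S, (j : ℕ)) = Complex.exp (Real.pi * Complex.I * ((∑ j ∈ S, (j : ℕ) : ℕ) : ℂ)) := by
    rw [mul_comm _ ((_ : ℕ) : ℂ), Complex.exp_nat_mul, Complex.exp_pi_mul_I]
  have hper : Complex.exp (-(q * (2 * Real.pi * Complex.I))) = 1 := by
    rw [Complex.exp_neg, Complex.exp_nat_mul_two_pi_mul_I, inv_one]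
  rw [hpow, hq', ← Complex.exp_add, ← Complex.exp_add, ← mul_one (Complex.exp _), ← hper, ← Complex.exp_add]
  congr 1
  ring
end

section
/- Let N = 2M−1 be an odd positive integer (so M = (N+1)/2). Let σ_1,…,σ_N and η_1,…,η_N be complex numbers with ∑_{i=1}^N σ_i = 0, ∑_{i=1}^N η_i = 0, and σ_i − σ_j ∉ ℤ for all i ≠ j. Set Σ_i = exp(2πi·σ_i) (pairwise distinct), ζ_i = exp(2πi·η_i), and ρ_i = (N−2i+1)/2. Let V be the N×N Vandermonde matrix V_{ij} = Σ_i^{j−1}, T = diag(ζ_1,…,ζ_N), and E = V^{−1}TV. Then the determinant of the bottom-left M×M submatrix of the inverse matrix E^{−1} (rows N−M+1,…,N, columns 1,…,M) equals ∑_{S ⊆ {1,…,N}, |S| = M} exp(iπ ∑_{i∈S}(−2η_i − ρ_i + σ_i)) · ∏ (2 sin(π(σ_i − σ_j)))^{−1}, where the product runs over all pairs 1 ≤ i < j ≤ N such that exactly one of i, j belongs to S. -/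
open Finset Matrix

lemma vdm_split {K M : ℕ} (y : Fin (K+M) → ℂ) :
    (vandermonde y).det = (vandermonde (fun k : Fin K => y (Fin.castAdd M k))).det *
      (vandermonde (fun k : Fin M => y (Fin.natAdd K k))).det *
      ∏ k : Fin K, ∏ m : Fin M, (y (Fin.natAdd K m) - y (Fin.castAdd M k)) := by
  have h : ∀ (n : ℕ) (z : Fin n → ℂ), (vandermonde z).det =
      ∏ i, ∏ j, if i < j then z j - z i else 1 := by
    intro n z
    rw [det_vandermonde]
    refine Finset.prod_congr rfl fun i _ => ?_
    rw [← Finset.prod_filter]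
    refine Finset.prod_congr ?_ fun _ _ => rfl
    ext j; simp
  rw [h, h, h, Fin.prod_univ_add]
  simp only [Fin.prod_univ_add, Finset.prod_mul_distrib]
  have h1 : ∀ (k : Fin K) (m : Fin M), Fin.castAdd M k < Fin.natAdd K m := by
    intro k m; rw [Fin.lt_def, Fin.val_castAdd, Fin.val_natAdd]; omega
  have h2 : ∀ (k : Fin K) (m : Fin M), ¬ Fin.natAdd K m < Fin.castAdd M k := by
    intro k m; rw [Fin.lt_def, Fin.val_castAdd, Fin.val_natAdd]; omega
  have h3 : ∀ (k m : Fin K), Fin.castAdd M k < Fin.castAdd M m ↔ k < m := by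
    intro k m; rw [Fin.lt_def, Fin.lt_def]; simp only [Fin.val_castAdd]
  have h4 : ∀ (k m : Fin M), Fin.natAdd K k < Fin.natAdd K m ↔ k < m := by
    intro k m; rw [Fin.lt_def, Fin.lt_def]; simp only [Fin.val_natAdd]; omega
  simp only [h1, h2, h3, h4, if_true, if_false, Finset.prod_const_one]
  ring

/-- mixed matrix -/
def WW {K M : ℕ} (S : Finset (Fin (K+M))) (x d : Fin (K+M) → ℂ) :
    Matrix (Fin (K+M)) (Fin (K+M)) ℂ := fun i =>
  if i ∈ S then Fin.append (fun _ : Fin K => 0) (fun m : Fin M => d i * x i ^ (m:ℕ))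
  else Fin.append (fun k : Fin K => x i ^ (k:ℕ)) (fun _ : Fin M => 0)

lemma WW_zero {K M : ℕ} (S : Finset (Fin (K+M))) (x d : Fin (K+M) → ℂ) (hS : S.card ≠ M) :
    (WW S x d).det = 0 := by
  rw [det_apply]
  refine Finset.sum_eq_zero fun p _ => ?_
  by_contra hne
  have hp : ∏ i, WW S x d (p i) i ≠ 0 := by
    intro h; rw [h] at hne; simp at hne
  rw [Finset.prod_ne_zero_iff] at hp
  have hr : ∀ m : Fin M, p (Fin.natAdd K m) ∈ S := by
    intro m
    by_contra hm
    apply hp (Fin.natAdd K m) (mem_univ _)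
    simp [WW, hm]
  have hl : ∀ m : Fin K, p (Fin.castAdd M m) ∉ S := by
    intro m hm
    apply hp (Fin.castAdd M m) (mem_univ _)
    simp [WW, hm]
  apply hS
  have : S = Finset.univ.map ((Fin.natAddEmb (m := M) K).trans p.toEmbedding) := by
    ext i
    simp only [Finset.mem_map, Finset.mem_univ, true_and]
    constructor
    · intro hi
      obtain ⟨j, rfl⟩ := p.surjective i
      induction j using Fin.addCases with
      | left k => exact absurd hi (hl k)
      | right m => exact ⟨m, rfl⟩
    · rintro ⟨m, rfl⟩; exact hr m
  rw [this]; simp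

lemma WW_card {K M : ℕ} (S : Finset (Fin (K+M))) (x d : Fin (K+M) → ℂ) (hS : S.card = M) :
    (WW S x d).det * ∏ i ∈ Sᶜ, ∏ j ∈ S, (x j - x i) = (∏ j ∈ S, d j) * (vandermonde x).det := by
  have hSc : (Sᶜ).card = K := by rw [Finset.card_compl, hS]; simp
  let e1 : Fin K ≃ {i // i ∈ Sᶜ} := (Finset.equivFinOfCardEq hSc).symm
  let e2 : Fin M ≃ {i // i ∈ S} := (Finset.equivFinOfCardEq hS).symm
  let g : Fin (K+M) → Fin (K+M) := Fin.append (fun k => (e1 k : Fin (K+M))) (fun m => (e2 m : Fin (K+M)))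
  have hg1 : ∀ k, g (Fin.castAdd M k) = e1 k := fun k => by simp [g]
  have hg2 : ∀ k, g (Fin.natAdd K k) = e2 k := fun k => by simp [g]
  have hgs : Function.Surjective g := by
    intro i
    by_cases hi : i ∈ S
    · exact ⟨Fin.natAdd K (e2.symm ⟨i, hi⟩), by rw [hg2]; simp⟩
    · exact ⟨Fin.castAdd M (e1.symm ⟨i, by simpa using hi⟩), by rw [hg1]; simp⟩
  let p : Equiv.Perm (Fin (K+M)) := Equiv.ofBijective g (Finite.surjective_iff_bijective.mp hgs)
  have hp1 : ∀ k, p (Fin.castAdd M k) = e1 k := hg1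
  have hp2 : ∀ k, p (Fin.natAdd K k) = e2 k := hg2
  have hn1 : ∀ k, (e1 k : Fin (K+M)) ∉ S := fun k => Finset.mem_compl.mp (e1 k).2
  have hn2 : ∀ k, (e2 k : Fin (K+M)) ∈ S := fun k => (e2 k).2
  have hd := det_permute p (WW S x d)
  have hv := det_permute p (vandermonde x)
  have hs : (((Equiv.Perm.sign p : ℤˣ) : ℤ) : ℂ) ≠ 0 := by
    rcases Int.units_eq_one_or (Equiv.Perm.sign p) with h | h <;> simp [h]
  have hv' : (vandermonde x).submatrix p id = vandermonde (x ∘ p) := by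
    ext i j; simp [vandermonde_apply]
  rw [hv', vdm_split] at hv
  have hd' : ((WW S x d).submatrix p id).det =
      (vandermonde (fun k : Fin K => x (e1 k))).det *
      ((∏ m : Fin M, d (e2 m)) * (vandermonde (fun k : Fin M => x (e2 k))).det) := by
    rw [← det_submatrix_equiv_self finSumFinEquiv, ← det_mul_column, ← det_fromBlocks_zero₂₁ _ 0 _]
    congr 1
    ext i j
    rcases i with i | i <;> rcases j with j | j <;>
      simp [WW, hp1, hp2, hn1, hn2, vandermonde_apply]
  rw [hd'] at hd
  have hq1 : ∀ f : Fin (K+M) → ℂ, ∏ i ∈ Sᶜ, f i = ∏ k, f (e1 k) := by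
    intro f
    rw [Equiv.prod_comp e1 (fun i => f i), Finset.prod_coe_sort]
  have hq2 : ∀ f : Fin (K+M) → ℂ, ∏ i ∈ S, f i = ∏ k, f (e2 k) := by
    intro f
    rw [Equiv.prod_comp e2 (fun i => f i), Finset.prod_coe_sort]
  apply mul_left_cancel₀ hs
  simp only [hq1, hq2]
  simp only [Function.comp_apply, hp1, hp2] at hv
  linear_combination (-(∏ k, ∏ m, (x (e2 m) - x (e1 k)))) * hd + (∏ m, d (e2 m)) * hv

lemma big_det {K M : ℕ} (x d : Fin (K+M) → ℂ) :
    (Matrix.of fun i => Fin.append (fun k : Fin K => x i ^ (k:ℕ)) (fun m : Fin M => d i * x i ^ (m:ℕ))).det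
     = ∑ S ∈ Finset.powersetCard M Finset.univ, (WW S x d).det := by
  have := (detRowAlternating (R := ℂ) (n := Fin (K+M))).toMultilinearMap.map_add_univ
    (fun i => Fin.append (fun _ : Fin K => 0) (fun m : Fin M => d i * x i ^ (m:ℕ)))
    (fun i => Fin.append (fun k : Fin K => x i ^ (k:ℕ)) (fun _ : Fin M => 0))
  have h1 : ∑ S ∈ Finset.powersetCard M Finset.univ, (WW S x d).det = ∑ S, (WW S x d).det := by
    apply Finset.sum_subset (Finset.subset_univ _)
    intro S _ hS
    apply WW_zero
    simpa [Finset.mem_powersetCard] using hS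
  rw [h1]
  convert this using 1
  · change Matrix.det _ = Matrix.det _
    congr 1
    ext i j
    induction j using Fin.addCases <;> simp
  · refine Finset.sum_congr rfl fun S _ => ?_
    change Matrix.det _ = Matrix.det _
    congr 1

lemma minor_eq {K M : ℕ} (x d : Fin (K+M) → ℂ) (hV : IsUnit (vandermonde x).det) (h : M ≤ K + M) :
    (vandermonde x).det * ((((vandermonde x)⁻¹ * diagonal d * vandermonde x)).submatrix (Fin.natAdd K) (Fin.castLE h)).det =
    (Matrix.of fun i => Fin.append (fun k : Fin K => x i ^ (k:ℕ)) (fun m : Fin M => d i * x i ^ (m:ℕ))).det := by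
  set A := (vandermonde x)⁻¹ * diagonal d * vandermonde x with hA
  have hVA : vandermonde x * A = diagonal d * vandermonde x := by
    rw [hA, Matrix.mul_assoc, Matrix.mul_nonsing_inv_cancel_left _ _ hV]
  have hB := det_fromBlocks_zero₂₁ (1 : Matrix (Fin K) (Fin K) ℂ)
    (A.submatrix (Fin.castAdd M) (Fin.castLE h)) (A.submatrix (Fin.natAdd K) (Fin.castLE h))
  rw [det_one, one_mul] at hB
  rw [← hB, ← det_submatrix_equiv_self finSumFinEquiv (vandermonde x), ← det_mul,
    ← det_submatrix_equiv_self finSumFinEquiv (Matrix.of _)]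
  congr 1
  ext i j
  rw [mul_apply, Fintype.sum_sum_type]
  rcases j with j | j
  · simp [Matrix.one_apply, vandermonde_apply]
  · have := congrFun (congrFun hVA (finSumFinEquiv i)) (Fin.castLE h j)
    rw [mul_apply, Fin.sum_univ_add, diagonal_mul] at this
    simpa [vandermonde_apply] using this

lemma sign_SS {n : ℕ} (S : Finset (Fin n)) :
    ∏ j ∈ S, ∏ i ∈ S, (if i < j then (-1:ℂ) else 1) = Complex.I ^ (S.card * (S.card - 1)) := by
  induction S using Finset.induction_on_max with
  | empty => simp
  | insert a S ha ih =>
    have hn : a ∉ S := fun h => lt_irrefl _ (ha a h)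
    rw [Finset.prod_insert hn]
    simp only [Finset.prod_insert hn]
    rw [Finset.prod_mul_distrib, ih, Finset.card_insert_of_notMem hn]
    have h1 : ∏ j ∈ S, (if a < j then (-1:ℂ) else 1) = 1 :=
      Finset.prod_eq_one fun j hj => by rw [if_neg (not_lt.mpr (ha j hj).le)]
    have h2 : ∏ i ∈ S, (if i < a then (-1:ℂ) else 1) = (-1) ^ S.card := by
      rw [← Finset.prod_const]
      exact Finset.prod_congr rfl fun i hi => by rw [if_pos (ha i hi)]
    rw [h1, h2, ← Complex.I_sq, ← pow_mul]
    simp only [lt_irrefl, if_false, one_mul]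
    rw [← pow_add]
    congr 1
    rcases Nat.eq_zero_or_pos S.card with h | h
    · simp [h]
    · obtain ⟨m, hm⟩ : ∃ m, S.card = m + 1 := ⟨S.card - 1, by omega⟩
      rw [hm]; simp only [Nat.add_sub_cancel]; ring

lemma sign_ScS {n : ℕ} (S : Finset (Fin n)) :
    Complex.I ^ (S.card * (S.card - 1)) * ∏ i ∈ Sᶜ, ∏ j ∈ S, (if i < j then (-1:ℂ) else 1) =
      ∏ j ∈ S, (-1:ℂ) ^ (j:ℕ) := by
  rw [← sign_SS, Finset.prod_comm (s := Sᶜ), ← Finset.prod_mul_distrib]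
  refine Finset.prod_congr rfl fun j _ => ?_
  rw [Finset.prod_mul_prod_compl, ← Finset.prod_filter, Finset.prod_const]
  congr 1
  rw [show (Finset.univ.filter fun i => i < j) = Finset.Iio j by ext; simp]
  simp

lemma pair_prod {n : ℕ} (S : Finset (Fin n)) (s : Fin n → Fin n → ℂ) :
    ∏ i ∈ Sᶜ, ∏ j ∈ S, (if i < j then s i j else s j i) =
    ∏ p ∈ (Finset.univ ×ˢ Finset.univ).filter
            (fun p : Fin n × Fin n => p.1 < p.2 ∧ ¬((p.1 ∈ S) ↔ (p.2 ∈ S))), s p.1 p.2 := by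
  rw [← Finset.prod_product']
  refine Finset.prod_nbij' (fun p => if p.1 < p.2 then p else (p.2, p.1))
    (fun p => if p.1 ∈ S then (p.2, p.1) else p) ?_ ?_ ?_ ?_ ?_
  · rintro ⟨i, j⟩ h
    simp only [Finset.mem_product, Finset.mem_compl] at h
    have hne : i ≠ j := fun e => h.1 (e ▸ h.2)
    by_cases hij : i < j
    · simp [hij, h.1, h.2]
    · simp [hij, h.1, h.2]; exact lt_of_le_of_ne (not_lt.mp hij) hne.symm
  · rintro ⟨i, j⟩ h
    simp only [Finset.mem_filter] at h
    by_cases hi : i ∈ S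
    · have : j ∉ S := by tauto
      simp [hi, this]
    · have : j ∈ S := by tauto
      simp [hi, this]
  · rintro ⟨i, j⟩ h
    simp only [Finset.mem_product, Finset.mem_compl] at h
    by_cases hij : i < j <;> simp [hij, h.1, h.2]
  · rintro ⟨i, j⟩ h
    simp only [Finset.mem_filter] at h
    by_cases hi : i ∈ S
    · simp [hi, not_lt.mpr h.2.1.le]
    · simp [hi, h.2.1]
  · rintro ⟨i, j⟩ h
    by_cases hij : i < j <;> simp [hij]

lemma exp_diff (a b : ℂ) : Complex.exp (2 * Real.pi * Complex.I * b) - Complex.exp (2 * Real.pi * Complex.I * a)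
    = Complex.exp (Real.pi * Complex.I * (a + b)) * (Complex.I * (2 * Complex.sin (Real.pi * (b - a)))) := by
  have h1 : Complex.exp (2 * Real.pi * Complex.I * b) = Complex.exp (Real.pi * Complex.I * (a + b)) *
     Complex.exp (Real.pi * (b - a) * Complex.I) := by rw [← Complex.exp_add]; ring_nf
  have h2 : Complex.exp (2 * Real.pi * Complex.I * a) = Complex.exp (Real.pi * Complex.I * (a + b)) *
     Complex.exp (-(Real.pi * (b - a)) * Complex.I) := by rw [← Complex.exp_add]; ring_nf
  rw [h1, h2, Complex.sin]
  linear_combination Complex.exp (Real.pi * Complex.I * (a + b)) * (Complex.exp (-(Real.pi * (b - a)) * Complex.I)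
    - Complex.exp (Real.pi * (b - a) * Complex.I)) * (-Complex.I_sq)

lemma scalar {K : ℕ} (σ x : Fin (K+(K+1)) → ℂ) (hσ0 : ∑ i, σ i = 0)
    (hx : ∀ i, x i = Complex.exp (2 * Real.pi * Complex.I * σ i)) (S : Finset (Fin (K+(K+1))))
    (hS : S.card = K+1) :
    ∏ i ∈ Sᶜ, ∏ j ∈ S, (x j - x i) = Complex.exp (-(Real.pi * Complex.I * ∑ i ∈ S, σ i)) *
      (∏ j ∈ S, (-1:ℂ) ^ (j:ℕ)) *
      ∏ p ∈ (Finset.univ ×ˢ Finset.univ).filter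
            (fun p : Fin (K+(K+1)) × Fin (K+(K+1)) => p.1 < p.2 ∧ ¬((p.1 ∈ S) ↔ (p.2 ∈ S))),
          (2 * Complex.sin ((Real.pi : ℂ) * (σ p.1 - σ p.2))) := by
  have hSc : (Sᶜ).card = K := by rw [Finset.card_compl, hS]; simp
  have hterm : ∀ i j, x j - x i = Complex.exp (Real.pi * Complex.I * (σ i + σ j)) *
      (Complex.I * ((if i < j then (-1:ℂ) else 1) *
        (if i < j then 2 * Complex.sin ((Real.pi : ℂ) * (σ i - σ j))
          else 2 * Complex.sin ((Real.pi : ℂ) * (σ j - σ i))))) := by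
    intro i j
    rw [hx, hx, exp_diff]
    split_ifs
    · rw [show (Real.pi : ℂ) * (σ j - σ i) = -(Real.pi * (σ i - σ j)) by ring, Complex.sin_neg]; ring
    · ring
  conv_lhs => simp only [hterm, Finset.prod_mul_distrib]
  rw [pair_prod S (fun i j => 2 * Complex.sin ((Real.pi : ℂ) * (σ i - σ j))), ← sign_ScS]
  have hI : ∏ i ∈ Sᶜ, ∏ j ∈ S, Complex.I = Complex.I ^ (S.card * (S.card - 1)) := by
    simp only [Finset.prod_const]
    rw [← pow_mul, hSc, hS, Nat.add_sub_cancel]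
  have hE : ∏ i ∈ Sᶜ, ∏ j ∈ S, Complex.exp (Real.pi * Complex.I * (σ i + σ j)) =
      Complex.exp (-(Real.pi * Complex.I * ∑ i ∈ S, σ i)) := by
    simp only [← Complex.exp_sum, ← Finset.mul_sum, Finset.sum_add_distrib, Finset.sum_const, hS, hSc]
    congr 1
    have := Finset.sum_add_sum_compl S σ
    rw [hσ0] at this
    simp only [nsmul_eq_mul, ← Finset.mul_sum]
    push_cast
    linear_combination (Real.pi * Complex.I * (K+1)) * this
  rw [hI, hE]
  rw [mul_assoc, mul_assoc, mul_assoc]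

theorem bottomLeft_minor_inv_odd_quantization
    (N M : ℕ) (hM : 1 ≤ M) (hNM : N + 1 = 2 * M)
    (σ η : Fin N → ℂ)
    (hσ0 : ∑ i, σ i = 0) (hη0 : ∑ i, η i = 0)
    (hnonint : ∀ i j : Fin N, i ≠ j → ∀ n : ℤ, σ i - σ j ≠ (n : ℂ))
    (Sg ζ : Fin N → ℂ)
    (hSg : ∀ i, Sg i = Complex.exp (2 * Real.pi * Complex.I * σ i))
    (hζ : ∀ i, ζ i = Complex.exp (2 * Real.pi * Complex.I * η i)) :
    (((((Matrix.vandermonde Sg)⁻¹ * Matrix.diagonal ζ * Matrix.vandermonde Sg)⁻¹).submatrix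
        (fun i : Fin M => (⟨N - M + i.val, by have := i.isLt; omega⟩ : Fin N))
        (Fin.castLE (by omega : M ≤ N))).det)
      =
    ∑ S ∈ Finset.powersetCard M (Finset.univ : Finset (Fin N)),
      Complex.exp (Real.pi * Complex.I *
          ∑ i ∈ S, (-2 * η i - ((N : ℂ) - 2 * ((i : ℕ) : ℂ) - 1) / 2 + σ i)) *
        ∏ p ∈ (Finset.univ ×ˢ Finset.univ).filter
            (fun p : Fin N × Fin N => p.1 < p.2 ∧ ¬((p.1 ∈ S) ↔ (p.2 ∈ S))),
          (2 * Complex.sin ((Real.pi : ℂ) * (σ p.1 - σ p.2)))⁻¹ := by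
  obtain ⟨K, rfl⟩ : ∃ K, M = K + 1 := ⟨M - 1, by omega⟩
  obtain rfl : N = K + (K + 1) := by omega
  have hinj : Function.Injective Sg := by
    intro i j hij
    by_contra hne
    rw [hSg, hSg, Complex.exp_eq_exp_iff_exists_int] at hij
    obtain ⟨n, hn⟩ := hij
    apply hnonint i j hne n
    have : (2 * Real.pi * Complex.I : ℂ) ≠ 0 := Complex.two_pi_I_ne_zero
    apply mul_left_cancel₀ this
    linear_combination hn
  have hdet : (vandermonde Sg).det ≠ 0 := det_vandermonde_ne_zero_iff.mpr hinj
  have hV : IsUnit (vandermonde Sg).det := isUnit_iff_ne_zero.mpr hdet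
  set d : Fin (K + (K+1)) → ℂ := fun i => Complex.exp (-(2 * Real.pi * Complex.I * η i)) with hd
  have hζd : ∀ i, ζ i * d i = 1 := by
    intro i; rw [hζ, hd, ← Complex.exp_add]; simp
  have hE : (((vandermonde Sg)⁻¹ * diagonal ζ * vandermonde Sg)⁻¹) =
      (vandermonde Sg)⁻¹ * diagonal d * vandermonde Sg := by
    apply Matrix.inv_eq_right_inv
    calc _ = (vandermonde Sg)⁻¹ * (diagonal ζ * ((vandermonde Sg * (vandermonde Sg)⁻¹) * diagonal d)) * vandermonde Sg := by
          simp only [Matrix.mul_assoc]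
      _ = 1 := by
          rw [Matrix.mul_nonsing_inv _ hV, Matrix.one_mul, diagonal_mul_diagonal]
          simp only [hζd, diagonal_one, Matrix.mul_one]
          exact Matrix.nonsing_inv_mul _ hV
  rw [hE]
  have hrow : (fun i : Fin (K+1) => (⟨K + (K+1) - (K+1) + i.val, by have := i.isLt; omega⟩ : Fin (K + (K+1))))
      = Fin.natAdd K := by
    ext i; simp
  rw [hrow]
  apply mul_left_cancel₀ hdet
  rw [minor_eq _ _ hV, big_det, Finset.mul_sum]
  refine Finset.sum_congr rfl fun S hS => ?_
  have hc : S.card = K + 1 := (Finset.mem_powersetCard.mp hS).2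
  have hL : ∏ i ∈ Sᶜ, ∏ j ∈ S, (Sg j - Sg i) ≠ 0 := by
    refine Finset.prod_ne_zero_iff.mpr fun i hi => Finset.prod_ne_zero_iff.mpr fun j hj => ?_
    rw [sub_ne_zero]
    intro h
    exact Finset.mem_compl.mp hi (hinj h ▸ hj)
  apply mul_right_cancel₀ hL
  rw [WW_card S Sg d hc]
  have hsc := scalar σ Sg hσ0 hSg S hc
  rw [Finset.prod_inv_distrib]
  rw [hsc] at hL ⊢
  have hP := right_ne_zero_of_mul hL
  have hexp : Complex.exp (Real.pi * Complex.I *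
          ∑ i ∈ S, (-2 * η i - (((K + (K+1) : ℕ) : ℂ) - 2 * ((i : ℕ) : ℂ) - 1) / 2 + σ i)) =
      (∏ j ∈ S, d j) * (∏ j ∈ S, (-1:ℂ) ^ (j:ℕ)) * Complex.exp (Real.pi * Complex.I * ∑ i ∈ S, σ i) := by
    have h1 : ∀ j : Fin (K+(K+1)), (-1:ℂ) ^ (j:ℕ) = Complex.exp ((j:ℕ) * (Real.pi * Complex.I)) := by
      intro j; rw [Complex.exp_nat_mul, Complex.exp_pi_mul_I]
    have h2 : Complex.exp (-(((K * (K+1) : ℕ) : ℂ) * (Real.pi * Complex.I))) = 1 := by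
      rw [Complex.exp_neg, Complex.exp_nat_mul, Complex.exp_pi_mul_I, (Nat.even_mul_succ_self K).neg_one_pow, inv_one]
    simp only [h1, hd, ← Complex.exp_sum]
    rw [← one_mul (Complex.exp _ * _ * _)]
    conv_rhs => rw [← h2, ← Complex.exp_add, ← Complex.exp_add, ← Complex.exp_add]
    congr 1
    have h3 : (((K * (K+1) : ℕ) : ℂ) * (Real.pi * Complex.I)) = ∑ i ∈ S, (K:ℂ) * (Real.pi * Complex.I) := by
      rw [Finset.sum_const, hc, nsmul_eq_mul]; push_cast; ring
    rw [h3, Finset.mul_sum, Finset.mul_sum, ← Finset.sum_neg_distrib, ← Finset.sum_add_distrib,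
      ← Finset.sum_add_distrib, ← Finset.sum_add_distrib]
    refine Finset.sum_congr rfl fun i _ => ?_
    push_cast; ring
  have hss : (∏ j ∈ S, (-1:ℂ) ^ (j:ℕ)) * (∏ j ∈ S, (-1:ℂ) ^ (j:ℕ)) = 1 := by
    rw [← Finset.prod_mul_distrib]
    refine Finset.prod_eq_one fun j _ => ?_
    rw [← mul_pow]; simp
  rw [hexp, Complex.exp_neg]
  have he := Complex.exp_ne_zero (Real.pi * Complex.I * ∑ i ∈ S, σ i)
  field_simp
  linear_combination (-(∏ j ∈ S, d j)) * hss
end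

section
/- Let N ≥ 1 and 1 ≤ M ≤ N be integers, let Σ_1,…,Σ_N ∈ ℂ be pairwise distinct and ζ_1,…,ζ_N ∈ ℂ. Let V be the N×N Vandermonde matrix V_{ij} = Σ_i^{j−1}, T = diag(ζ_1,…,ζ_N), and E = V^{−1}TV. Then the determinant of the bottom-left M×M submatrix of E (rows N−M+1,…,N, columns 1,…,M) equals ∑_{S ⊆ {1,…,N}, |S| = M} (∏_{i∈S} ζ_i) · ∏_{i∈S} ∏_{j∈S^c} (Σ_i − Σ_j)^{−1}, where S^c = {1,…,N}∖S. -/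
open Finset Matrix

def auxU (N K : ℕ) (Sg : Fin N → ℂ) : Fin N → Fin N → ℂ :=
  fun i c => if (c : ℕ) < K then Sg i ^ (c : ℕ) else 0

def auxW (N K : ℕ) (Sg : Fin N → ℂ) : Fin N → Fin N → ℂ :=
  fun i c => if (c : ℕ) < K then 0 else Sg i ^ ((c : ℕ) - K)

def auxC (N K : ℕ) (Sg : Fin N → ℂ) (S : Finset (Fin N)) : ℂ :=
  Matrix.det (Matrix.of (S.piecewise (auxW N K Sg) (auxU N K Sg)))

def auxF (N K : ℕ) (Sg a : Fin N → ℂ) : ℂ :=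
  Matrix.det (Matrix.of (fun i c : Fin N =>
    if (c : ℕ) < K then Sg i ^ (c : ℕ) else a i * Sg i ^ ((c : ℕ) - K)))

lemma auxF_eq (N K : ℕ) (Sg a : Fin N → ℂ) :
    auxF N K Sg a = ∑ S : Finset (Fin N), (∏ i ∈ S, a i) * auxC N K Sg S := by
  have h := (Matrix.detRowAlternating (n := Fin N) (R := ℂ)).toMultilinearMap.map_add_univ
    (fun i => a i • auxW N K Sg i) (auxU N K Sg)
  have h1 : auxF N K Sg a = (Matrix.detRowAlternating (n := Fin N) (R := ℂ)).toMultilinearMap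
      ((fun i => a i • auxW N K Sg i) + auxU N K Sg) := by
    unfold auxF
    change Matrix.det _ = Matrix.det _
    congr 1
    ext i c
    simp only [Matrix.of_apply, Pi.add_apply, Pi.smul_apply, auxU, auxW]
    split_ifs <;> simp
  rw [h1, h]
  refine Finset.sum_congr rfl fun S _ => ?_
  have h2 := (Matrix.detRowAlternating (n := Fin N) (R := ℂ)).toMultilinearMap.map_piecewise_smul
    a (S.piecewise (auxW N K Sg) (auxU N K Sg)) S
  have h3 : S.piecewise (fun i => a i • auxW N K Sg i) (auxU N K Sg) =
      S.piecewise (fun i => a i • (S.piecewise (auxW N K Sg) (auxU N K Sg)) i)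
        (S.piecewise (auxW N K Sg) (auxU N K Sg)) := by
    funext i
    by_cases hi : i ∈ S <;> simp [hi]
  rw [h3, h2]
  rfl

lemma auxC_zero (K M : ℕ) (Sg : Fin (K + M) → ℂ) (S : Finset (Fin (K + M))) (hS : S.card ≠ M) :
    auxC (K + M) K Sg S = 0 := by
  unfold auxC
  rw [Matrix.det_apply]
  refine Finset.sum_eq_zero fun σ _ => ?_
  suffices h : ∃ i, (Matrix.of (S.piecewise (auxW (K+M) K Sg) (auxU (K+M) K Sg))) (σ i) i = 0 by
    obtain ⟨i, hi⟩ := h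
    have h0 := Finset.prod_eq_zero (f := fun i =>
      (Matrix.of (S.piecewise (auxW (K+M) K Sg) (auxU (K+M) K Sg))) (σ i) i) (Finset.mem_univ i) hi
    exact (congrArg _ h0).trans (smul_zero _)
  by_contra! hne
  apply hS
  have key : ∀ i, σ i ∈ S ↔ ¬ ((i : ℕ) < K) := by
    intro i
    have := hne i
    by_cases h1 : σ i ∈ S <;> by_cases h2 : (i : ℕ) < K <;>
      simp_all [auxW, auxU]
  have h4 : S = (Finset.univ.map (Fin.natAddEmb K)).map σ.toEmbedding := by
    ext x
    obtain ⟨i, rfl⟩ := σ.surjective x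
    rw [key]
    simp only [Finset.mem_map, Finset.mem_univ, true_and, Equiv.coe_toEmbedding]
    constructor
    · intro h
      exact ⟨i, ⟨⟨i - K, by omega⟩, by ext; simp; omega⟩, rfl⟩
    · rintro ⟨_, ⟨j, rfl⟩, hj⟩
      have := σ.injective hj
      subst this
      simp
  rw [h4]
  simp

lemma auxF_vand (K M : ℕ) (Sg : Fin (K + M) → ℂ) (S : Finset (Fin (K + M))) (hS : S.card = M) :
    auxF (K + M) K Sg (fun i => ∏ j ∈ Sᶜ, (Sg i - Sg j)) = (Matrix.vandermonde Sg).det := by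
  have hSc : Sᶜ.card = K := by rw [Finset.card_compl, Fintype.card_fin]; omega
  set q : Polynomial ℂ := ∏ j ∈ Sᶜ, (Polynomial.X - Polynomial.C (Sg j)) with hq
  have hqm : q.Monic := Polynomial.monic_prod_of_monic _ _ fun j _ => Polynomial.monic_X_sub_C _
  have hqd : q.natDegree = K := by
    rw [hq, Polynomial.natDegree_prod_of_monic _ _ fun j _ => Polynomial.monic_X_sub_C _]
    simp [hSc]
  let p : Fin (K + M) → Polynomial ℂ := fun c =>
    if (c : ℕ) < K then Polynomial.X ^ (c : ℕ) else q * Polynomial.X ^ ((c : ℕ) - K)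
  rw [Matrix.det_eval_matrixOfPolynomials_eq_det_vandermonde Sg p]
  · unfold auxF
    congr 1
    ext i c
    simp only [Matrix.of_apply, p]
    split_ifs
    · simp
    · simp [hq, Polynomial.eval_prod]
  · intro c
    simp only [p]
    split_ifs
    · simp
    · rw [hqm.natDegree_mul (Polynomial.monic_X_pow _), hqd, Polynomial.natDegree_X_pow]; omega
  · intro c
    simp only [p]
    split_ifs
    · exact Polynomial.monic_X_pow _
    · exact hqm.mul (Polynomial.monic_X_pow _)

lemma auxC_eq (K M : ℕ) (Sg : Fin (K + M) → ℂ) (S : Finset (Fin (K + M))) (hS : S.card = M) :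
    (∏ i ∈ S, ∏ j ∈ Sᶜ, (Sg i - Sg j)) * auxC (K + M) K Sg S = (Matrix.vandermonde Sg).det := by
  rw [← auxF_vand K M Sg S hS, auxF_eq]
  symm
  refine Finset.sum_eq_single S ?_ (by simp)
  intro S' _ hne
  by_cases hc : S'.card = M
  · have : ¬ S' ⊆ S := fun h => hne (Finset.eq_of_subset_of_card_le h (by omega))
    obtain ⟨i, hi, hi'⟩ := Finset.not_subset.1 this
    rw [Finset.prod_eq_zero hi, zero_mul]
    exact Finset.prod_eq_zero (Finset.mem_compl.2 hi') (sub_self _)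
  · rw [auxC_zero K M Sg S' hc, mul_zero]

lemma aux_minor_s3 (K M : ℕ) (Sg ζ : Fin (K + M) → ℂ) (hdet : IsUnit (Matrix.vandermonde Sg).det) :
    (Matrix.vandermonde Sg).det *
    (((Matrix.vandermonde Sg)⁻¹ * Matrix.diagonal ζ * Matrix.vandermonde Sg).submatrix
        (fun i : Fin M => Fin.natAdd K i)
        (Fin.castLE (Nat.le_add_left M K))).det = auxF (K + M) K Sg ζ := by
  set V := Matrix.vandermonde Sg with hV
  set E := V⁻¹ * Matrix.diagonal ζ * V with hE
  have hVE : V * E = Matrix.diagonal ζ * V := by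
    rw [hE, ← Matrix.mul_assoc, ← Matrix.mul_assoc, Matrix.mul_nonsing_inv _ hdet, Matrix.one_mul]
  let G : Matrix (Fin (K + M)) (Fin (K + M)) ℂ := Matrix.of fun r c =>
    if (c : ℕ) < K then (1 : Matrix (Fin (K + M)) (Fin (K + M)) ℂ) r c
      else E r ⟨(c : ℕ) - K, by omega⟩
  have hG : (E.submatrix (fun i : Fin M => Fin.natAdd K i)
        (Fin.castLE (Nat.le_add_left M K))).det = G.det := by
    rw [← Matrix.det_submatrix_equiv_self finSumFinEquiv G]
    have : G.submatrix finSumFinEquiv finSumFinEquiv = Matrix.fromBlocks 1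
        (E.submatrix (Fin.castAdd M) (Fin.castLE (Nat.le_add_left M K))) 0
        (E.submatrix (fun i : Fin M => Fin.natAdd K i)
        (Fin.castLE (Nat.le_add_left M K))) := by
      ext i j
      rcases i with i | i <;> rcases j with j | j
      · simp [G, Matrix.one_apply]
      · simp [G, Fin.castLE]
      · simp [G, Matrix.one_apply, Fin.ext_iff]; omega
      · simp [G, Fin.castLE]
    rw [this, Matrix.det_fromBlocks_zero₂₁]
    simp
  rw [hG, ← Matrix.det_mul]
  unfold auxF
  congr 1
  ext i c
  by_cases hc : (c : ℕ) < K
  · have : (V * G) i c = (V * (1 : Matrix (Fin (K + M)) (Fin (K + M)) ℂ)) i c := by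
      simp only [Matrix.mul_apply, G, Matrix.of_apply, hc, if_true]
    rw [this]
    simp [hc, hV, Matrix.vandermonde_apply]
  · have : (V * G) i c = (V * E) i ⟨(c : ℕ) - K, by omega⟩ := by
      simp only [Matrix.mul_apply, G, Matrix.of_apply, hc, if_false]
    rw [this, hVE]
    simp [hc, hV, Matrix.vandermonde_apply, Matrix.diagonal_mul]


/-- The determinant of the bottom-left M×M submatrix of E = V⁻¹ T V,
where V is the Vandermonde matrix of the pairwise distinct Σᵢ and T = diag(ζ), equals
∑_{S ⊆ {1,…,N}, |S| = M} (∏_{i∈S} ζᵢ) ∏_{i∈S} ∏_{j∈Sᶜ} (Σᵢ − Σⱼ)⁻¹. -/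
theorem bottomLeft_minor_eq_sum_over_subsets
    (N M : ℕ) (hN : 1 ≤ N) (hM1 : 1 ≤ M) (hMN : M ≤ N)
    (Sg ζ : Fin N → ℂ) (hSg : Function.Injective Sg) :
    ((((Matrix.vandermonde Sg)⁻¹ * Matrix.diagonal ζ * Matrix.vandermonde Sg).submatrix
        (fun i : Fin M => (⟨N - M + i.val, by have := i.isLt; omega⟩ : Fin N))
        (Fin.castLE hMN)).det)
      =
    ∑ S ∈ Finset.powersetCard M (Finset.univ : Finset (Fin N)),
      (∏ i ∈ S, ζ i) * ∏ i ∈ S, ∏ j ∈ Sᶜ, (Sg i - Sg j)⁻¹ := by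

  obtain ⟨K, rfl⟩ : ∃ K, N = K + M := ⟨N - M, by omega⟩
  have hV : (Matrix.vandermonde Sg).det ≠ 0 := Matrix.det_vandermonde_ne_zero_iff.2 hSg
  have h := aux_minor_s3 K M Sg ζ (isUnit_iff_ne_zero.2 hV)
  have hidx : (fun i : Fin M => (⟨K + M - M + i.val, by have := i.isLt; omega⟩ : Fin (K + M))) =
      fun i : Fin M => Fin.natAdd K i := by
    funext i
    ext
    simp
  rw [hidx]
  apply mul_left_cancel₀ hV
  rw [h, auxF_eq, Finset.mul_sum]
  symm
  apply Finset.sum_subset_zero_on_sdiff (Finset.subset_univ _)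
  · intro S hS
    rw [auxC_zero K M Sg S (by simpa [Finset.mem_powersetCard] using hS), mul_zero]
  · intro S hS
    have hc : S.card = M := (Finset.mem_powersetCard.1 hS).2
    have h1 := auxC_eq K M Sg S hc
    have h2 : (∏ i ∈ S, ∏ j ∈ Sᶜ, (Sg i - Sg j)) ≠ 0 := by
      intro h0
      rw [h0, zero_mul] at h1
      exact hV h1.symm
    simp only [Finset.prod_inv_distrib]
    rw [← h1]
    field_simp
end

section
/- Let N ≥ 1 and 1 ≤ M ≤ N be integers, let Σ_1,…,Σ_N ∈ ℂ be pairwise distinct and ζ_1,…,ζ_N ∈ ℂ. Let V be the N×N Vandermonde matrix V_{ij} = Σ_i^{j−1}, T = diag(ζ_1,…,ζ_N), and E = V^{−1}TV. Then the determinant of the bottom-left M×M submatrix of E (rows N−M+1,…,N, columns 1,…,M) equals ∑_{S ⊆ {1,…,N}, |S| = M} (−1)^{∑_{i∈S} i + ∑_{i=N−M+1}^{N} i} (∏_{i∈S} ζ_i) · ∏ (Σ_i − Σ_j)^{−1}, where the product runs over all pairs (i,j) with 1 ≤ j < i ≤ N such that exactly one of i, j belongs to S. -/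
open Finset Matrix

theorem bl_vdm_append {K M : ℕ} (w : Fin (K + M) → ℂ) :
    (vandermonde w).det = (vandermonde fun i => w (Fin.castAdd M i)).det *
      (vandermonde fun i => w (Fin.natAdd K i)).det *
      ∏ j : Fin M, ∏ i : Fin K, (w (Fin.natAdd K j) - w (Fin.castAdd M i)) := by
  have key : ∀ (n : ℕ) (v : Fin n → ℂ), (vandermonde v).det =
      ∏ i : Fin n, ∏ j : Fin n, if i < j then v j - v i else 1 := by
    intro n v
    rw [det_vandermonde]
    refine Finset.prod_congr rfl fun i _ => ?_
    rw [← Finset.prod_filter]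
    refine Finset.prod_congr ?_ fun _ _ => rfl
    ext j; simp
  rw [key, key, key, Fin.prod_univ_add]
  simp only [Fin.prod_univ_add]
  have h1 : ∀ (i : Fin K) (j : Fin M), Fin.castAdd M i < Fin.natAdd K j := by
    intro i j; simp [Fin.lt_def]; omega
  have h2 : ∀ (i : Fin K) (j : Fin M), ¬ Fin.natAdd K j < Fin.castAdd M i := by
    intro i j; simp [Fin.lt_def]; omega
  have h3 : ∀ (i j : Fin K), Fin.castAdd M i < Fin.castAdd M j ↔ i < j := by
    intro i j; exact Iff.rfl
  have h4 : ∀ (i j : Fin M), Fin.natAdd K i < Fin.natAdd K j ↔ i < j := by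
    intro i j; simp
  simp only [h1, h2, h3, h4, if_true, if_false, Finset.prod_const_one, one_mul,
    Finset.prod_mul_distrib]
  rw [Finset.prod_comm (s := (univ : Finset (Fin M))) (t := (univ : Finset (Fin K)))
    (f := fun j i => w (Fin.natAdd K j) - w (Fin.castAdd M i))]
  ring

theorem bl_det_zero {n : ℕ} (A : Matrix (Fin n) (Fin n) ℂ) (R C : Finset (Fin n))
    (h : C.card < R.card) (hA : ∀ i ∈ R, ∀ j, j ∉ C → A i j = 0) : A.det = 0 := by
  rw [← det_transpose, det_apply]
  refine Finset.sum_eq_zero fun σ _ => ?_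
  have : ∃ i ∈ R, σ i ∉ C := by
    by_contra hc
    push Not at hc
    have := Finset.card_le_card_of_injOn σ hc σ.injective.injOn
    omega
  obtain ⟨i, hi, hσ⟩ := this
  have h0 : ∏ i, Aᵀ (σ i) i = 0 :=
    Finset.prod_eq_zero (Finset.mem_univ i) (by simpa using hA i hi _ hσ)
  rw [h0, smul_zero]

/-- rows with low powers -/
noncomputable def blA (K M : ℕ) (s : Fin (K + M) → ℂ) : Fin (K + M) → Fin (K + M) → ℂ :=
  fun i => Fin.append (fun k : Fin K => s i ^ (k : ℕ)) (fun _ : Fin M => 0)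

/-- rows with weighted powers -/
noncomputable def blB (K M : ℕ) (s z : Fin (K + M) → ℂ) : Fin (K + M) → Fin (K + M) → ℂ :=
  fun i => Fin.append (fun _ : Fin K => 0) (fun k : Fin M => z i * s i ^ (k : ℕ))

theorem bl_expand (K M : ℕ) (s z : Fin (K + M) → ℂ) :
    Matrix.det (Matrix.of (blB K M s z + blA K M s)) =
      ∑ S : Finset (Fin (K + M)), Matrix.det (Matrix.of (S.piecewise (blB K M s z) (blA K M s))) :=
  (Matrix.detRowAlternating (n := Fin (K + M)) (R := ℂ)).toMultilinearMap.map_add_univ _ _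

theorem bl_det_vanish (K M : ℕ) (s z : Fin (K + M) → ℂ) (S : Finset (Fin (K + M)))
    (hS : S.card ≠ M) :
    Matrix.det (Matrix.of (S.piecewise (blB K M s z) (blA K M s))) = 0 := by
  rcases lt_or_gt_of_ne hS with h | h
  · refine bl_det_zero _ Sᶜ (univ.map (Fin.castAddEmb M)) ?_ ?_
    · rw [card_compl, card_map]; simp; omega
    · intro i hi j hj
      have hi' : i ∉ S := by simpa using hi
      simp only [of_apply, Finset.piecewise_eq_of_notMem _ _ _ hi', blA]
      refine Fin.addCases (fun k hk => ?_) (fun k _ => ?_) j hj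
      · exact absurd (by simp) hk
      · simp
  · refine bl_det_zero _ S (univ.map (Fin.natAddEmb K)) ?_ ?_
    · rw [card_map]; simpa using h
    · intro i hi j hj
      simp only [of_apply, Finset.piecewise_eq_of_mem _ _ _ hi, blB]
      refine Fin.addCases (fun k _ => ?_) (fun k hk => ?_) j hj
      · simp
      · exact absurd (by simp) hk

theorem bl_det_main (K M : ℕ) (s z : Fin (K + M) → ℂ) (hs : Function.Injective s)
    (S : Finset (Fin (K + M))) (hS : S.card = M) :
    Matrix.det (Matrix.of (S.piecewise (blB K M s z) (blA K M s))) =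
      (vandermonde s).det * ((∏ i ∈ S, z i) * ∏ p ∈ S ×ˢ Sᶜ, (s p.1 - s p.2)⁻¹) := by
  have hSc : Sᶜ.card = K := by rw [card_compl, hS]; simp
  let e : Fin K ⊕ Fin M ≃ Fin (K + M) :=
    (Equiv.sumComm _ _).trans (finSumEquivOfFinset hS hSc)
  have hl : ∀ i, e (Sum.inl i) = Sᶜ.orderEmbOfFin hSc i := fun i => rfl
  have hr : ∀ i, e (Sum.inr i) = S.orderEmbOfFin hS i := fun i => rfl
  have hlm : ∀ i, e (Sum.inl i) ∉ S := fun i => by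
    rw [hl]; exact Finset.mem_compl.1 (Finset.orderEmbOfFin_mem _ hSc i)
  have hrm : ∀ i, e (Sum.inr i) ∈ S := fun i => by
    rw [hr]; exact Finset.orderEmbOfFin_mem _ hS i
  have prodS : ∀ f : Fin (K + M) → ℂ, ∏ i ∈ S, f i = ∏ i : Fin M, f (e (Sum.inr i)) := by
    intro f
    have : S = univ.map (S.orderEmbOfFin hS).toEmbedding := by simp
    conv_lhs => rw [this]
    rw [Finset.prod_map]; rfl
  have prodSc : ∀ f : Fin (K + M) → ℂ, ∏ i ∈ Sᶜ, f i = ∏ i : Fin K, f (e (Sum.inl i)) := by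
    intro f
    have : Sᶜ = univ.map (Sᶜ.orderEmbOfFin hSc).toEmbedding := by simp
    conv_lhs => rw [this]
    rw [Finset.prod_map]; rfl
  let σ : Equiv.Perm (Fin (K + M)) := finSumFinEquiv.symm.trans e
  have σl : ∀ i, σ (Fin.castAdd M i) = e (Sum.inl i) := fun i => by simp [σ]
  have σr : ∀ i, σ (Fin.natAdd K i) = e (Sum.inr i) := fun i => by simp [σ]
  set D := Matrix.of (S.piecewise (blB K M s z) (blA K M s)) with hD
  have h1 := Matrix.det_permute σ D
  have h2 := Matrix.det_permute σ (vandermonde s)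
  have h3 : ((vandermonde s).submatrix σ id) = vandermonde (fun i => s (σ i)) := rfl
  have h4 : (D.submatrix σ id).det =
      (vandermonde fun i => s (e (Sum.inl i))).det *
      ((∏ i ∈ S, z i) * (vandermonde fun i => s (e (Sum.inr i))).det) := by
    rw [← Matrix.det_submatrix_equiv_self finSumFinEquiv]
    have : (D.submatrix σ id).submatrix finSumFinEquiv finSumFinEquiv =
        fromBlocks (vandermonde fun i => s (e (Sum.inl i))) 0 0
          (diagonal (fun i => z (e (Sum.inr i))) * (vandermonde fun i => s (e (Sum.inr i)))) := by
      ext i j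
      rcases i with i | i <;> rcases j with j | j <;>
        simp [hD, σl, σr, hlm, hrm, blA, blB, vandermonde_apply, diagonal_mul]
    rw [this, det_fromBlocks_zero₂₁, det_mul, det_diagonal, prodS]
  rw [h3, bl_vdm_append] at h2
  simp only [σl, σr] at h2
  rw [h4] at h1
  have hQ : ∏ j : Fin M, ∏ i : Fin K, (s (e (Sum.inr j)) - s (e (Sum.inl i))) ≠ 0 := by
    refine Finset.prod_ne_zero_iff.2 fun j _ => Finset.prod_ne_zero_iff.2 fun i _ => ?_
    rw [sub_ne_zero]
    intro h
    have := e.injective (hs h)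
    simp at this
  rw [Finset.prod_product]
  simp only [prodSc]
  rw [prodS (fun x => ∏ i : Fin K, (s x - s (e (Sum.inl i)))⁻¹)]
  simp only [Finset.prod_inv_distrib]
  set Q := ∏ j : Fin M, ∏ i : Fin K, (s (e (Sum.inr j)) - s (e (Sum.inl i)))
  have hsg : ((Equiv.Perm.sign σ : ℤ) : ℂ) ≠ 0 := by
    rcases Int.units_eq_one_or (Equiv.Perm.sign σ) with h | h <;> simp [h]
  apply mul_left_cancel₀ hsg
  rw [← h1]
  field_simp
  linear_combination (∏ i ∈ S, z i) * h2

theorem bl_minor (K M : ℕ) (s z : Fin (K + M) → ℂ) (hs : Function.Injective s)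
    (r c : Fin M → Fin (K + M)) (hr : ∀ i, r i = Fin.natAdd K i) (hc : ∀ i, (c i : ℕ) = i) :
    (vandermonde s).det *
      (((vandermonde s)⁻¹ * diagonal z * vandermonde s).submatrix r c).det =
    Matrix.det (Matrix.of (blB K M s z + blA K M s)) := by
  have hV : IsUnit (vandermonde s).det := (det_vandermonde_ne_zero_iff.2 hs).isUnit
  set V := vandermonde s with hVd
  set E := V⁻¹ * diagonal z * V with hE
  have hVE : V * E = diagonal z * V := by
    rw [hE, Matrix.mul_assoc, ← Matrix.mul_assoc, Matrix.mul_nonsing_inv _ hV, Matrix.one_mul]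
  let Q : Matrix (Fin (K + M)) (Fin (K + M)) ℂ := Matrix.of fun i =>
    Fin.append (fun k : Fin K => (1 : Matrix (Fin (K + M)) (Fin (K + M)) ℂ) i (Fin.castAdd M k))
      (fun k : Fin M => E i (c k))
  have hQ : Q.det = (E.submatrix r c).det := by
    rw [← Matrix.det_submatrix_equiv_self finSumFinEquiv]
    have : Q.submatrix finSumFinEquiv finSumFinEquiv =
        fromBlocks 1 (Matrix.of fun i j => E (Fin.castAdd M i) (c j)) 0 (E.submatrix r c) := by
      ext i j
      rcases i with i | i <;> rcases j with j | j
      · simp [Q, Matrix.one_apply]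
      · simp [Q]
      · have : Fin.natAdd K i ≠ Fin.castAdd M j := by
          intro h; have := congrArg Fin.val h; simp at this; omega
        simp [Q, Matrix.one_apply, this]
      · simp [Q, hr]
    rw [this, det_fromBlocks_zero₂₁, det_one, one_mul]
  rw [← hQ, ← det_mul]
  congr 1
  ext i j
  refine Fin.addCases (fun k => ?_) (fun k => ?_) j
  · have : (V * Q) i (Fin.castAdd M k) = (V * (1 : Matrix (Fin (K + M)) (Fin (K + M)) ℂ)) i (Fin.castAdd M k) := by
      simp only [Matrix.mul_apply, Q, of_apply, Fin.append_left]
    rw [this, Matrix.mul_one]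
    simp [blA, blB, hVd, vandermonde_apply]
  · have : (V * Q) i (Fin.natAdd K k) = (V * E) i (c k) := by
      simp [Matrix.mul_apply, Q]
    rw [this, hVE]
    simp [blA, blB, hVd, vandermonde_apply, diagonal_mul, hc]

theorem bl_count (K M : ℕ) (S : Finset (Fin (K + M))) (hS : S.card = M) :
    ((S ×ˢ Sᶜ).filter (fun p => p.1 < p.2)).card + ∑ i ∈ S, ((i : ℕ) + 1) =
      ∑ i ∈ Finset.Icc (K + 1) (K + M), i := by
  have h1 : ((S ×ˢ Sᶜ).filter (fun p => p.1 < p.2)).card =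
      ∑ i ∈ S, (Sᶜ.filter (fun j => i < j)).card := by
    simp only [Finset.card_filter, Finset.sum_product]
  have h2 : ∀ i ∈ S, (Sᶜ.filter (fun j => i < j)).card + (S.filter (fun j => i < j)).card
      + ((i : ℕ) + 1) = K + M := by
    intro i _
    have : (Sᶜ.filter (fun j => i < j)).card + (S.filter (fun j => i < j)).card =
        (Finset.Ioi i).card := by
      rw [← Finset.card_union_of_disjoint
        (Finset.disjoint_filter_filter (disjoint_compl_left)), ← Finset.filter_union]
      congr 1; ext j; simp [em']
    rw [this, Fin.card_Ioi]; have := i.isLt; omega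
  have h3 := Finset.sum_congr rfl h2
  simp only [Finset.sum_add_distrib (f := fun i => _ + _)] at h3
  rw [Finset.sum_add_distrib, Finset.sum_const, hS] at h3
  have h4 : ∑ i ∈ S, (S.filter (fun j => i < j)).card = ∑ k : Fin M, (M - 1 - (k : ℕ)) := by
    have hm : S = univ.map (S.orderEmbOfFin hS).toEmbedding := by simp
    conv_lhs => rw [hm]
    rw [Finset.sum_map]
    refine Finset.sum_congr rfl fun k _ => ?_
    rw [Finset.filter_map, Finset.card_map]
    rw [← Fin.card_Ioi]
    congr 1; ext j; simp
  have h5 : ∑ i ∈ Finset.Icc (K + 1) (K + M), i + ∑ k : Fin M, (M - 1 - (k : ℕ)) = M * (K + M) := by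
    rw [Fin.sum_univ_eq_sum_range (fun k => M - 1 - k) M, Finset.sum_range_reflect (fun k => k) M]
    clear * -
    induction M with
    | zero => simp
    | succ n ih =>
      rw [← add_assoc, Finset.sum_Icc_succ_top (by omega), Finset.sum_range_succ]
      nlinarith
  rw [h4, smul_eq_mul] at h3
  omega

theorem bl_sign (K M : ℕ) (s : Fin (K + M) → ℂ) (S : Finset (Fin (K + M))) (hS : S.card = M) :
    ∏ p ∈ S ×ˢ Sᶜ, (s p.1 - s p.2)⁻¹ =
    (-1 : ℂ) ^ ((∑ i ∈ S, ((i : ℕ) + 1)) + ∑ i ∈ Finset.Icc (K + 1) (K + M), i) *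
        ∏ p ∈ (Finset.univ ×ˢ Finset.univ).filter
            (fun p : Fin (K + M) × Fin (K + M) => p.2 < p.1 ∧ ¬((p.1 ∈ S) ↔ (p.2 ∈ S))),
          (s p.1 - s p.2)⁻¹ := by
  have hc := bl_count K M S hS
  set a := ((S ×ˢ Sᶜ).filter (fun p => p.1 < p.2)).card with ha
  set b := ∑ i ∈ S, ((i : ℕ) + 1)
  have hsg : (-1 : ℂ) ^ (b + ∑ i ∈ Finset.Icc (K + 1) (K + M), i) = (-1) ^ a := by
    rw [← hc, show b + (a + b) = a + 2 * b by ring, pow_add, pow_mul]; simp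
  rw [hsg, ← Finset.prod_filter_mul_prod_filter_not (S ×ˢ Sᶜ) (fun p => p.1 < p.2)]
  have hU : (Finset.univ ×ˢ Finset.univ).filter
      (fun p : Fin (K + M) × Fin (K + M) => p.2 < p.1 ∧ ¬((p.1 ∈ S) ↔ (p.2 ∈ S))) =
      (((S ×ˢ Sᶜ).filter (fun p => p.1 < p.2)).map (Equiv.prodComm _ _).toEmbedding) ∪
      ((S ×ˢ Sᶜ).filter (fun p => ¬ p.1 < p.2)) := by
    ext ⟨x, y⟩
    simp only [mem_filter, mem_product, mem_univ, true_and, mem_union, mem_map_equiv,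
      Equiv.prodComm_symm, Equiv.prodComm_apply, Prod.swap, mem_compl]
    constructor
    · rintro ⟨h, h'⟩
      by_cases hx : x ∈ S <;> by_cases hy : y ∈ S <;> simp_all
      exact h.le
    · rintro (⟨⟨h1, h2⟩, h⟩ | ⟨⟨h1, h2⟩, h⟩)
      · simp_all
      · refine ⟨lt_of_le_of_ne (not_lt.1 h) ?_, by simp_all⟩
        rintro rfl; exact h2 h1
  have hdis : Disjoint (((S ×ˢ Sᶜ).filter (fun p => p.1 < p.2)).map
      (Equiv.prodComm _ _).toEmbedding) ((S ×ˢ Sᶜ).filter (fun p => ¬ p.1 < p.2)) := by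
    rw [Finset.disjoint_left]
    rintro ⟨x, y⟩ h1 h2
    simp only [mem_filter, mem_product, mem_map_equiv,
      Equiv.prodComm_symm, Equiv.prodComm_apply, Prod.swap, mem_compl] at h1 h2
    exact h1.1.2 h2.1.1
  rw [hU, Finset.prod_union hdis, ← mul_assoc]
  congr 1
  rw [Finset.prod_map, ha, ← Finset.prod_const, ← Finset.prod_mul_distrib]
  refine Finset.prod_congr rfl fun p _ => ?_
  simp only [Equiv.coe_toEmbedding, Equiv.prodComm_apply, Prod.fst_swap, Prod.snd_swap]
  rw [← neg_sub, inv_neg]; ring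

/-- the determinant of the bottom-left M×M submatrix of E = V⁻¹ T V equals
∑_{S, |S| = M} (−1)^{∑_{i∈S} i + ∑_{i=N−M+1}^N i} (∏_{i∈S} ζᵢ) ∏ (Σᵢ − Σⱼ)⁻¹,
the product over pairs j < i with exactly one of i, j in S. -/
theorem bottomLeft_minor_signed_formula
    (N M : ℕ) (hN : 1 ≤ N) (hM1 : 1 ≤ M) (hMN : M ≤ N)
    (Sg ζ : Fin N → ℂ) (hSg : Function.Injective Sg) :
    ((((Matrix.vandermonde Sg)⁻¹ * Matrix.diagonal ζ * Matrix.vandermonde Sg).submatrix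
        (fun i : Fin M => (⟨N - M + i.val, by have := i.isLt; omega⟩ : Fin N))
        (Fin.castLE hMN)).det)
      =
    ∑ S ∈ Finset.powersetCard M (Finset.univ : Finset (Fin N)),
      (-1 : ℂ) ^ ((∑ i ∈ S, ((i : ℕ) + 1)) + ∑ i ∈ Finset.Icc (N - M + 1) N, i) *
        (∏ i ∈ S, ζ i) *
        ∏ p ∈ (Finset.univ ×ˢ Finset.univ).filter
            (fun p : Fin N × Fin N => p.2 < p.1 ∧ ¬((p.1 ∈ S) ↔ (p.2 ∈ S))),
          (Sg p.1 - Sg p.2)⁻¹ := by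
  obtain ⟨K, rfl⟩ : ∃ K, N = K + M := ⟨N - M, by omega⟩
  have hV : (vandermonde Sg).det ≠ 0 := det_vandermonde_ne_zero_iff.2 hSg
  apply mul_left_cancel₀ hV
  rw [bl_minor K M Sg ζ hSg _ _ (fun i => by ext; simp) (fun i => by simp), bl_expand,
    Finset.mul_sum]
  symm
  rw [← Finset.sum_subset (Finset.subset_univ (Finset.powersetCard M univ))]
  · refine Finset.sum_congr rfl fun S hS => ?_
    have hS' : S.card = M := (Finset.mem_powersetCard.1 hS).2
    rw [bl_det_main K M Sg ζ hSg S hS', bl_sign K M Sg S hS', Nat.add_sub_cancel]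
    ring
  · intro S _ hS
    exact bl_det_vanish K M Sg ζ S (fun h => hS (Finset.mem_powersetCard.2 ⟨subset_univ _, h⟩))
end

section
/- Let N ≥ 1 and 1 ≤ M ≤ N be integers and let Σ_1,…,Σ_N ∈ ℂ be pairwise distinct. Let V be the N×N Vandermonde matrix V_{ij} = Σ_i^{j−1}, and set M₂ = {N−M+1,…,N}. For any S ⊆ {1,…,N} with |S| = M, the determinant of the submatrix (V^{−1})_{M₂,S} (rows in M₂, columns in S, in increasing order) equals (−1)^{∑_{i∈S} i + ∑_{i∈M₂} i} · (∏_{i,j∈S^c, i>j} (Σ_i − Σ_j)) / (∏_{1 ≤ j < i ≤ N} (Σ_i − Σ_j)), where S^c = {1,…,N}∖S. -/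
open Finset Matrix

lemma aux_jacobi {K M : ℕ} (A B : Matrix (Fin K ⊕ Fin M) (Fin K ⊕ Fin M) ℂ) (h : A * B = 1) :
    A.det * (B.submatrix Sum.inr Sum.inr).det = (A.submatrix Sum.inl Sum.inl).det := by
  have hA := Matrix.fromBlocks_toBlocks A
  have hB := Matrix.fromBlocks_toBlocks B
  have h2 := h
  rw [← hA, ← hB, Matrix.fromBlocks_multiply, ← Matrix.fromBlocks_one, Matrix.fromBlocks_inj] at h2
  obtain ⟨_, h12, _, h22⟩ := h2
  have key : A * Matrix.fromBlocks 1 B.toBlocks₁₂ 0 B.toBlocks₂₂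
      = Matrix.fromBlocks A.toBlocks₁₁ 0 A.toBlocks₂₁ 1 := by
    conv_lhs => rw [← hA]
    rw [Matrix.fromBlocks_multiply, h12, h22]
    simp
  have := congrArg Matrix.det key
  rw [Matrix.det_mul, Matrix.det_fromBlocks_zero₂₁, Matrix.det_fromBlocks_zero₁₂] at this
  simp only [Matrix.det_one, one_mul, mul_one] at this
  exact this

lemma aux_prod {N K : ℕ} (f : Fin N → ℂ) (T : Finset (Fin N)) (hT : T.card = K) :
    (∏ p ∈ (T ×ˢ T).filter (fun p : Fin N × Fin N => p.2 < p.1), (f p.1 - f p.2))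
      = (Matrix.vandermonde (fun i => f (T.orderEmbOfFin hT i))).det := by
  rw [Matrix.det_vandermonde, Finset.prod_filter, Finset.prod_product_right]
  have e : ∀ g : Fin N → ℂ, ∏ x ∈ T, g x = ∏ i, g (T.orderEmbOfFin hT i) := by
    intro g
    conv_lhs => rw [← Finset.map_orderEmbOfFin_univ T hT]
    rw [Finset.prod_map]; rfl
  rw [e]
  refine Finset.prod_congr rfl fun i _ => ?_
  rw [e]
  simp only [OrderEmbedding.lt_iff_lt]
  rw [← Finset.prod_filter]
  refine Finset.prod_congr ?_ fun _ _ => rfl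
  ext; simp

lemma aux_sign {K M : ℕ} (S : Finset (Fin (K+M))) (hS : S.card = M) (hSc : Sᶜ.card = K)
    (τ : Equiv.Perm (Fin (K+M)))
    (hl : ∀ i : Fin K, τ (Fin.castAdd M i) = Sᶜ.orderEmbOfFin hSc i)
    (hr : ∀ i : Fin M, τ (Fin.natAdd K i) = S.orderEmbOfFin hS i) :
    ((τ.sign : ℤ) : ℂ) =
      (-1 : ℂ) ^ ((∑ i ∈ S, ((i : ℕ) + 1)) + ∑ i ∈ Finset.Icc (K + 1) (K+M), i) := by
  have h1 : τ.sign = ∏ j : Fin M, ∏ i : Fin K,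
      if S.orderEmbOfFin hS j < Sᶜ.orderEmbOfFin hSc i then (-1 : ℤˣ) else 1 := by
    rw [Equiv.Perm.sign_eq_prod_prod_Ioi]
    have : ∀ i : Fin (K+M), (∏ j ∈ Ioi i, if τ i < τ j then (1:ℤˣ) else -1)
        = ∏ j, if i < j ∧ τ j < τ i then (-1:ℤˣ) else 1 := by
      intro i
      rw [← Finset.prod_subset (Finset.subset_univ (Ioi i))]
      · refine Finset.prod_congr rfl fun j hj => ?_
        have hj' := Finset.mem_Ioi.1 hj
        have hne : τ i ≠ τ j := fun h => hj'.ne (τ.injective h)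
        rcases lt_or_gt_of_ne hne with h | h
        · simp [h, h.not_gt]
        · simp [h, h.not_gt, hj']
      · intro j _ hj
        simp at hj
        simp [hj.not_gt]
    simp only [this]
    rw [Fin.prod_univ_add]
    simp only [Fin.prod_univ_add, hl, hr]
    have a1 : ∀ i j : Fin K, ¬ (Fin.castAdd M i < Fin.castAdd M j ∧
        Sᶜ.orderEmbOfFin hSc j < Sᶜ.orderEmbOfFin hSc i) := by
      rintro i j ⟨h, h'⟩
      rw [OrderEmbedding.lt_iff_lt] at h'
      rw [Fin.lt_def] at h h'
      simp only [Fin.val_castAdd, Fin.val_natAdd] at h; omega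
    have a2 : ∀ i j : Fin M, ¬ (Fin.natAdd K i < Fin.natAdd K j ∧
        S.orderEmbOfFin hS j < S.orderEmbOfFin hS i) := by
      rintro i j ⟨h, h'⟩
      rw [OrderEmbedding.lt_iff_lt] at h'
      rw [Fin.lt_def] at h h'
      simp only [Fin.val_castAdd, Fin.val_natAdd] at h; omega
    have a3 : ∀ (i : Fin M) (j : Fin K), ¬ (Fin.natAdd K i < Fin.castAdd M j) := by
      intro i j h
      simp [Fin.lt_def] at h; omega
    have a4 : ∀ (i : Fin M) (j : Fin K), (Fin.castAdd M j < Fin.natAdd K i) := by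
      intro i j
      simp [Fin.lt_def]; omega
    simp only [a1, a2, a3, a4, if_false, false_and, true_and, Finset.prod_const_one, one_mul, mul_one]
    rw [Finset.prod_comm]
  have h2 : ∀ j : Fin M,
      (S.orderEmbOfFin hS j : ℕ) + 1 + (univ.filter fun i : Fin K =>
        S.orderEmbOfFin hS j < Sᶜ.orderEmbOfFin hSc i).card = K + 1 + j := by
    intro j
    have c1 : (Ioi (S.orderEmbOfFin hS j)).card = K + M - 1 - (S.orderEmbOfFin hS j : ℕ) := by simp
    have c2 : (Ioi (S.orderEmbOfFin hS j)).card = ∑ x : Fin (K+M),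
        if S.orderEmbOfFin hS j < x then 1 else 0 := by
      rw [← Finset.sum_filter, ← Finset.card_eq_sum_ones]
      congr 1; ext; simp
    rw [← Equiv.sum_comp τ, Fin.sum_univ_add] at c2
    simp only [hl, hr, OrderEmbedding.lt_iff_lt] at c2
    rw [← Finset.sum_filter, ← Finset.sum_filter, ← Finset.card_eq_sum_ones,
      ← Finset.card_eq_sum_ones] at c2
    have c3 : (univ.filter fun i : Fin M => j < i).card = M - 1 - j := by
      rw [← Fin.card_Ioi]; congr 1; ext; simp
    have := (S.orderEmbOfFin hS j).isLt
    omega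
  have e : ∑ x ∈ S, ((x:ℕ)+1) = ∑ i, ((S.orderEmbOfFin hS i : ℕ) + 1) := by
    conv_lhs => rw [← Finset.map_orderEmbOfFin_univ S hS]
    rw [Finset.sum_map]; rfl
  have h3 : ∑ i ∈ Finset.Icc (K + 1) (K+M), i = ∑ j : Fin M, (K + 1 + (j:ℕ)) := by
    rw [Fin.sum_univ_eq_sum_range (fun j => K + 1 + j), ← Finset.Ico_add_one_right_eq_Icc,
      Finset.sum_Ico_eq_sum_range]
    congr 2; omega
  rw [h3, ← Finset.sum_congr rfl (fun j _ => h2 j), e,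
    Finset.sum_add_distrib (f := fun j => (S.orderEmbOfFin hS j : ℕ) + 1), ← add_assoc,
    pow_add, Even.neg_one_pow ⟨_, rfl⟩, one_mul, h1, ← Finset.prod_pow_eq_pow_sum]
  push_cast
  refine Finset.prod_congr rfl fun j _ => ?_
  rw [← Finset.prod_const, Finset.prod_filter]
  refine Finset.prod_congr rfl fun i _ => ?_
  split_ifs <;> simp



/-- for S ⊆ {1,…,N} with |S| = M and M₂ = {N−M+1,…,N},
det((V⁻¹)_{M₂,S}) = (−1)^{∑_{i∈S} i + ∑_{i∈M₂} i}
  (∏_{i,j∈Sᶜ, i>j} (Σᵢ − Σⱼ)) / (∏_{1≤j<i≤N} (Σᵢ − Σⱼ)). -/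
theorem det_Vinv_submatrix
    (N M : ℕ) (hN : 1 ≤ N) (hM1 : 1 ≤ M) (hMN : M ≤ N)
    (Sg : Fin N → ℂ) (hSg : Function.Injective Sg)
    (S : Finset (Fin N)) (hS : S.card = M) :
    (((Matrix.vandermonde Sg)⁻¹.submatrix
        (fun i : Fin M => (⟨N - M + i.val, by have := i.isLt; omega⟩ : Fin N))
        (fun j : Fin M => (S.orderIsoOfFin hS j : Fin N))).det)
      =
    (-1 : ℂ) ^ ((∑ i ∈ S, ((i : ℕ) + 1)) + ∑ i ∈ Finset.Icc (N - M + 1) N, i) *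
      (∏ p ∈ (Sᶜ ×ˢ Sᶜ).filter (fun p : Fin N × Fin N => p.2 < p.1), (Sg p.1 - Sg p.2)) /
      (∏ p ∈ (Finset.univ ×ˢ Finset.univ).filter
          (fun p : Fin N × Fin N => p.2 < p.1), (Sg p.1 - Sg p.2)) := by
  obtain ⟨K, rfl⟩ : ∃ K, N = K + M := ⟨N - M, by omega⟩
  have hSc : Sᶜ.card = K := by rw [Finset.card_compl, hS]; simp
  let σ : Fin K ⊕ Fin M ≃ Fin (K+M) := (Equiv.sumComm _ _).trans (finSumEquivOfFinset hS hSc)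
  let τ : Equiv.Perm (Fin (K+M)) := finSumFinEquiv.symm.trans σ
  have hl : ∀ i : Fin K, τ (Fin.castAdd M i) = Sᶜ.orderEmbOfFin hSc i := by
    intro i; simp [τ, σ]
  have hr : ∀ i : Fin M, τ (Fin.natAdd K i) = S.orderEmbOfFin hS i := by
    intro i; simp [τ, σ]
  have hdet : (Matrix.vandermonde Sg).det ≠ 0 := Matrix.det_vandermonde_ne_zero_iff.2 hSg
  have hden : (∏ p ∈ (Finset.univ ×ˢ Finset.univ).filter
          (fun p : Fin (K+M) × Fin (K+M) => p.2 < p.1), (Sg p.1 - Sg p.2))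
        = (Matrix.vandermonde Sg).det := by
    rw [aux_prod Sg univ (Finset.card_fin _)]
    congr 2
    ext i
    rw [← Finset.orderEmbOfFin_unique (Finset.card_fin (K+M)) (f := id) (by simp) strictMono_id]
    rfl
  rw [hden, aux_prod Sg Sᶜ hSc]
  have hsub : K + M - M = K := by omega
  simp only [hsub]
  rw [← aux_sign S hS hSc τ hl hr]
  have hJ := aux_jacobi ((Matrix.vandermonde Sg).submatrix (fun x => τ (finSumFinEquiv x)) finSumFinEquiv)
    ((Matrix.vandermonde Sg)⁻¹.submatrix finSumFinEquiv (fun x => τ (finSumFinEquiv x))) (by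
      rw [Matrix.submatrix_mul_equiv, Matrix.mul_nonsing_inv _ (isUnit_iff_ne_zero.2 hdet)]
      exact Matrix.submatrix_one _ (τ.injective.comp finSumFinEquiv.injective))
  have hA : ((Matrix.vandermonde Sg).submatrix (fun x => τ (finSumFinEquiv x))
      (finSumFinEquiv : Fin K ⊕ Fin M ≃ _)).det = ((τ.sign : ℤ) : ℂ) * (Matrix.vandermonde Sg).det := by
    rw [← Matrix.det_permute, ← Matrix.det_submatrix_equiv_self finSumFinEquiv]
    rfl
  have hA1 : (((Matrix.vandermonde Sg).submatrix (fun x => τ (finSumFinEquiv x))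
      (finSumFinEquiv : Fin K ⊕ Fin M ≃ _)).submatrix Sum.inl Sum.inl)
      = Matrix.vandermonde (fun i => Sg (Sᶜ.orderEmbOfFin hSc i)) := by
    ext i j
    simp [Matrix.vandermonde_apply, hl]
  have hB : (((Matrix.vandermonde Sg)⁻¹.submatrix (finSumFinEquiv : Fin K ⊕ Fin M ≃ _)
      (fun x => τ (finSumFinEquiv x))).submatrix Sum.inr Sum.inr)
      = (Matrix.vandermonde Sg)⁻¹.submatrix
        (fun i : Fin M => (⟨K + i.val, by have := i.isLt; omega⟩ : Fin (K+M)))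
        (fun j : Fin M => (S.orderIsoOfFin hS j : Fin (K+M))) := by
    ext i j
    simp only [Matrix.submatrix_apply, finSumFinEquiv_apply_right, hr]
    rfl
  rw [hA, hA1, hB] at hJ
  rw [eq_div_iff hdet, ← hJ]
  have hs : ((τ.sign : ℤ) : ℂ) * ((τ.sign : ℤ) : ℂ) = 1 := by
    rcases Int.units_eq_one_or τ.sign with h | h <;> simp [h]
  linear_combination (-((Matrix.vandermonde Sg)⁻¹.submatrix
        (fun i : Fin M => (⟨K + i.val, by have := i.isLt; omega⟩ : Fin (K+M)))
        (fun j : Fin M => (S.orderIsoOfFin hS j : Fin (K+M)))).det * (Matrix.vandermonde Sg).det) * hs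
end

section
/- Let N ≥ 2 be an integer, ℏ > 0 and Λ > 0 real numbers, and u_2,…,u_N ∈ ℂ. Let 0 < δ ≤ π and let φ : ℂ → ℂ be holomorphic on the open strip {x ∈ ℂ : |Im x| < δ} and satisfy there the oper equation (−iℏ)^N φ^{(N)}(x) + ∑_{k=2}^{N−2} (−1)^k u_k (−iℏ)^{N−k} φ^{(N−k)}(x) + (Λ^N e^{−x} + Λ^N e^{x} + (−1)^N u_N) φ(x) = 0 (empty sum for N < 4). Assume there exist constants a, b, C > 0 such that |φ(x)| ≤ C·exp(−a·e^{b|Re x|}) for all x with |Im x| ≤ δ/2. Then for every y ∈ ℂ the integral ψ(y) = (2πℏ)^{−1/2} ∫_ℝ e^{−ixy/ℏ} φ(x) dx converges absolutely, and ψ satisfies the difference equation Λ^N (ψ(y+iℏ) + ψ(y−iℏ)) + V_N(y) ψ(y) = (−1)^{N+1} u_N ψ(y) for all y ∈ ℂ, where V_N(y) = y^N + ∑_{k=2}^{N−2} (−1)^k u_k y^{N−k}. -/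
open Finset MeasureTheory

lemma aux_decay (a b C : ℝ) (ha : 0 < a) (hb : 0 < b) (hC : 0 < C) (c : ℝ) :
    ∃ K : ℝ, ∀ s : ℝ, 0 ≤ s → C * Real.exp (-a * Real.exp (b * s)) ≤ K * Real.exp (-c * s) := by
  refine ⟨C * Real.exp (c ^ 2 / (2 * a * b ^ 2)), fun s hs => ?_⟩
  rw [mul_assoc, ← Real.exp_add]
  gcongr
  have h1 := Real.quadratic_le_exp_of_nonneg (x := b * s) (by positivity)
  have h2 : a * ((b * s) ^ 2 / 2) ≤ a * Real.exp (b * s) := by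
    gcongr
    have : 0 ≤ b * s := by positivity
    linarith
  have h3 : c ^ 2 / (2 * a * b ^ 2) + -c * s + a * ((b * s) ^ 2 / 2)
      = (a * b ^ 2 * s - c) ^ 2 / (2 * a * b ^ 2) := by
    field_simp
    ring
  have h4 : 0 ≤ (a * b ^ 2 * s - c) ^ 2 / (2 * a * b ^ 2) := by positivity
  linarith

lemma aux_diff (δ : ℝ) (φ : ℂ → ℂ)
    (hφhol : DifferentiableOn ℂ φ {x : ℂ | |x.im| < δ}) (m : ℕ) :
    DifferentiableOn ℂ (iteratedDeriv m φ) {x : ℂ | |x.im| < δ} := by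
  have ho : IsOpen {x : ℂ | |x.im| < δ} :=
    isOpen_lt (Complex.continuous_im.abs) continuous_const
  induction m with
  | zero => simpa using hφhol
  | succ m ih => rw [iteratedDeriv_succ]; exact ih.deriv ho

lemma aux_bound (δ : ℝ) (hδ0 : 0 < δ) (φ : ℂ → ℂ)
    (hφhol : DifferentiableOn ℂ φ {x : ℂ | |x.im| < δ})
    (a b C : ℝ) (ha : 0 < a) (hb : 0 < b) (hC : 0 < C)
    (hbound : ∀ x : ℂ, |x.im| ≤ δ / 2 →
      ‖φ x‖ ≤ C * Real.exp (-a * Real.exp (b * |x.re|))) (m : ℕ) (c : ℝ) (hc : 0 ≤ c) :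
    ∃ K : ℝ, ∀ t : ℝ, ‖iteratedDeriv m φ t‖ ≤ K * Real.exp (-c * |t|) := by
  obtain ⟨K, hK⟩ := aux_decay a b C ha hb hC c
  have hK0 : 0 ≤ K := by
    have := hK 0 le_rfl
    simp only [mul_zero, Real.exp_zero, mul_one] at this
    exact le_trans (by positivity) this
  refine ⟨m.factorial * (K * Real.exp (c * (δ / 2))) / (δ / 2) ^ m, fun t => ?_⟩
  have key : ∀ z ∈ Metric.sphere (t : ℂ) (δ / 2),
      ‖φ z‖ ≤ K * Real.exp (c * (δ / 2)) * Real.exp (-c * |t|) := by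
    intro z hz
    rw [mem_sphere_iff_norm] at hz
    have h1 : |z.im| ≤ δ / 2 := by
      have := Complex.abs_im_le_norm (z - t)
      simpa [hz] using this
    have h2 : |z.re - t| ≤ δ / 2 := by
      have := Complex.abs_re_le_norm (z - t)
      simpa [hz] using this
    refine (hbound z h1).trans ((hK _ (abs_nonneg _)).trans ?_)
    rw [mul_assoc, ← Real.exp_add]
    gcongr
    have h3 : |t| ≤ |z.re| + δ / 2 := by
      have := abs_sub_abs_le_abs_sub t z.re
      rw [abs_sub_comm] at this
      linarith
    nlinarith
  have hd : DiffContOnCl ℂ φ (Metric.ball (t : ℂ) (δ / 2)) := by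
    apply DifferentiableOn.diffContOnCl
    apply hφhol.mono
    intro z hz
    have hz' := Metric.closure_ball_subset_closedBall hz
    rw [mem_closedBall_iff_norm] at hz'
    have := Complex.abs_im_le_norm (z - t)
    simp only [Complex.sub_im, Complex.ofReal_im, sub_zero] at this
    show |z.im| < δ
    linarith
  have := Complex.norm_iteratedDeriv_le_of_forall_mem_sphere_norm_le m (by positivity) hd key
  refine this.trans (le_of_eq ?_)
  ring

lemma aux_expint : Integrable (fun t : ℝ => Real.exp (-|t|)) := by
  refine (integrable_inv_one_add_sq.const_mul 2).mono'
    (Continuous.aestronglyMeasurable (by fun_prop)) (Filter.Eventually.of_forall fun t => ?_)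
  rw [Real.norm_eq_abs, Real.abs_exp, Real.exp_neg, ← div_eq_mul_inv, inv_eq_one_div,
    div_le_div_iff₀ (Real.exp_pos _) (by positivity)]
  have h1 := Real.quadratic_le_exp_of_nonneg (abs_nonneg t)
  rw [sq_abs] at h1
  have := abs_nonneg t
  linarith

lemma aux_hasDeriv (δ : ℝ) (hδ0 : 0 < δ) (φ : ℂ → ℂ)
    (hφhol : DifferentiableOn ℂ φ {x : ℂ | |x.im| < δ}) (m : ℕ) (t : ℝ) :
    HasDerivAt (fun t : ℝ => iteratedDeriv m φ t) (iteratedDeriv (m + 1) φ t) t := by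
  have ho : IsOpen {x : ℂ | |x.im| < δ} :=
    isOpen_lt (Complex.continuous_im.abs) continuous_const
  have h := (aux_diff δ φ hφhol m).differentiableAt (x := (t : ℂ))
    (ho.mem_nhds (by simpa using hδ0))
  rw [iteratedDeriv_succ]
  exact h.hasDerivAt.comp_ofReal

lemma aux_int (hbar : ℝ) (hhbar : 0 < hbar) (δ : ℝ) (hδ0 : 0 < δ) (φ : ℂ → ℂ)
    (hφhol : DifferentiableOn ℂ φ {x : ℂ | |x.im| < δ})
    (a b C : ℝ) (ha : 0 < a) (hb : 0 < b) (hC : 0 < C)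
    (hbound : ∀ x : ℂ, |x.im| ≤ δ / 2 →
      ‖φ x‖ ≤ C * Real.exp (-a * Real.exp (b * |x.re|))) (m : ℕ) (y : ℂ) :
    Integrable (fun t : ℝ => Complex.exp (-Complex.I * t * y / hbar) * iteratedDeriv m φ t) := by
  obtain ⟨K, hK⟩ := aux_bound δ hδ0 φ hφhol a b C ha hb hC hbound m (‖y‖ / hbar + 1)
    (by positivity)
  refine (aux_expint.const_mul K).mono' ?_ (Filter.Eventually.of_forall fun t => ?_)
  · have h1 : Continuous (fun t : ℝ => iteratedDeriv m φ t) :=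
      continuous_iff_continuousAt.2 fun t => (aux_hasDeriv δ hδ0 φ hφhol m t).continuousAt
    exact Continuous.aestronglyMeasurable (by fun_prop)
  · rw [norm_mul]
    have h2 : ‖Complex.exp (-Complex.I * t * y / hbar)‖ ≤ Real.exp (‖y‖ / hbar * |t|) := by
      rw [Complex.norm_exp]
      gcongr
      refine (Complex.re_le_norm _).trans (le_of_eq ?_)
      simp [abs_of_pos hhbar]
      ring
    calc _ ≤ Real.exp (‖y‖ / hbar * |t|) * (K * Real.exp (-(‖y‖ / hbar + 1) * |t|)) :=
          mul_le_mul h2 (hK t) (norm_nonneg _) (Real.exp_nonneg _)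
      _ = K * (Real.exp (‖y‖ / hbar * |t|) * Real.exp (-(‖y‖ / hbar + 1) * |t|)) := by ring
      _ = K * Real.exp (-|t|) := by rw [← Real.exp_add]; congr 2; ring

lemma aux_ibp (hbar : ℝ) (hhbar : 0 < hbar) (δ : ℝ) (hδ0 : 0 < δ) (φ : ℂ → ℂ)
    (hφhol : DifferentiableOn ℂ φ {x : ℂ | |x.im| < δ})
    (a b C : ℝ) (ha : 0 < a) (hb : 0 < b) (hC : 0 < C)
    (hbound : ∀ x : ℂ, |x.im| ≤ δ / 2 →
      ‖φ x‖ ≤ C * Real.exp (-a * Real.exp (b * |x.re|))) (m : ℕ) (y : ℂ) :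
    (-Complex.I * hbar) ^ m *
      ∫ t : ℝ, Complex.exp (-Complex.I * t * y / hbar) * iteratedDeriv m φ t
    = y ^ m * ∫ t : ℝ, Complex.exp (-Complex.I * t * y / hbar) * φ t := by
  have hne : (hbar : ℂ) ≠ 0 := by exact_mod_cast hhbar.ne'
  have hI := fun m => aux_int hbar hhbar δ hδ0 φ hφhol a b C ha hb hC hbound m y
  induction m with
  | zero => simp
  | succ m ih =>
    have hE : ∀ t : ℝ, HasDerivAt (fun t : ℝ => Complex.exp (-Complex.I * t * y / hbar))
        (Complex.exp (-Complex.I * t * y / hbar) * (-Complex.I * y / hbar)) t := by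
      intro t
      have h0 : HasDerivAt (fun z : ℂ => -Complex.I * z * y / hbar)
          (-Complex.I * 1 * y / hbar) (t : ℂ) :=
        (((hasDerivAt_id (t : ℂ)).const_mul (-Complex.I)).mul_const y).div_const _
      have := h0.cexp.comp_ofReal
      simpa using this
    have h0 := integral_eq_zero_of_hasDerivAt_of_integrable
      (fun t => (hE t).mul (aux_hasDeriv δ hδ0 φ hφhol m t))
      (by
        refine (((hI m).const_mul (-Complex.I * y / hbar)).add (hI (m + 1))).congr
          (Filter.Eventually.of_forall fun t => ?_)
        simp only [Pi.add_apply]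
        ring) (hI m)
    have h1 : ∫ t : ℝ, ((-Complex.I * y / hbar) *
        (Complex.exp (-Complex.I * t * y / hbar) * iteratedDeriv m φ t)
        + Complex.exp (-Complex.I * t * y / hbar) * iteratedDeriv (m + 1) φ t) = 0 := by
      rw [← h0]
      congr 1
      ext t
      ring
    rw [integral_add ((hI m).const_mul _) (hI (m + 1)), integral_const_mul] at h1
    have h2 := eq_neg_of_add_eq_zero_right h1
    rw [h2, pow_succ y, mul_right_comm, ← ih, pow_succ]
    generalize (∫ t : ℝ, Complex.exp (-Complex.I * t * y / hbar) * iteratedDeriv m φ t) = J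
    generalize (-Complex.I * (hbar : ℂ)) ^ m = P
    have h3 : -Complex.I * hbar * (-Complex.I * y / hbar) = -y := by
      field_simp
      simp
    linear_combination (-P * J) * h3

/-- if φ is holomorphic on the strip |Im x| < δ (0 < δ ≤ π), solves the
oper equation there, and decays double-exponentially on |Im x| ≤ δ/2, then its Fourier
transform ψ(y) = (2πℏ)^{-1/2} ∫_ℝ e^{-ixy/ℏ} φ(x) dx converges absolutely for every
y ∈ ℂ and satisfies the Baxter-type difference equation. -/
theorem fourier_of_oper_solution_satisfies_baxter
    (N : ℕ) (hN : 2 ≤ N) (hbar Lam : ℝ) (hhbar : 0 < hbar) (hLam : 0 < Lam)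
    (u : ℕ → ℂ) (δ : ℝ) (hδ0 : 0 < δ) (hδπ : δ ≤ Real.pi)
    (φ : ℂ → ℂ)
    (hφhol : DifferentiableOn ℂ φ {x : ℂ | |x.im| < δ})
    (hoper : ∀ x : ℂ, |x.im| < δ →
      (-Complex.I * hbar) ^ N * iteratedDeriv N φ x
        + (∑ k ∈ Finset.Icc 2 (N - 2),
            (-1 : ℂ) ^ k * u k * (-Complex.I * hbar) ^ (N - k) * iteratedDeriv (N - k) φ x)
        + ((Lam : ℂ) ^ N * Complex.exp (-x) + (Lam : ℂ) ^ N * Complex.exp x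
            + (-1 : ℂ) ^ N * u N) * φ x = 0)
    (a b C : ℝ) (ha : 0 < a) (hb : 0 < b) (hC : 0 < C)
    (hbound : ∀ x : ℂ, |x.im| ≤ δ / 2 →
      ‖φ x‖ ≤ C * Real.exp (-a * Real.exp (b * |x.re|)))
    (ψ : ℂ → ℂ)
    (hψ : ∀ y : ℂ, ψ y = (Real.sqrt (2 * Real.pi * hbar))⁻¹ *
        ∫ t : ℝ, Complex.exp (-Complex.I * t * y / hbar) * φ t) :
    (∀ y : ℂ, Integrable (fun t : ℝ => Complex.exp (-Complex.I * t * y / hbar) * φ t))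
    ∧ ∀ y : ℂ,
      (Lam : ℂ) ^ N * (ψ (y + Complex.I * hbar) + ψ (y - Complex.I * hbar))
        + (y ^ N + ∑ k ∈ Finset.Icc 2 (N - 2), (-1 : ℂ) ^ k * u k * y ^ (N - k)) * ψ y
        = (-1 : ℂ) ^ (N + 1) * u N * ψ y := by
  have hI := fun m y => aux_int hbar hhbar δ hδ0 φ hφhol a b C ha hb hC hbound m y
  have hJ := fun m y => aux_ibp hbar hhbar δ hδ0 φ hφhol a b C ha hb hC hbound m y
  have hI0 : ∀ y : ℂ, Integrable
      (fun t : ℝ => Complex.exp (-Complex.I * t * y / hbar) * φ t) := by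
    intro y
    simpa using hI 0 y
  have hne : (hbar : ℂ) ≠ 0 := by exact_mod_cast hhbar.ne'
  refine ⟨hI0, fun y => ?_⟩
  have hp : ∀ t : ℝ, Complex.exp (-Complex.I * t * (y + Complex.I * hbar) / hbar)
      = Complex.exp (-Complex.I * t * y / hbar) * Complex.exp t := by
    intro t
    rw [← Complex.exp_add]
    congr 1
    field_simp
    ring_nf
    simp
  have hm : ∀ t : ℝ, Complex.exp (-Complex.I * t * (y - Complex.I * hbar) / hbar)
      = Complex.exp (-Complex.I * t * y / hbar) * Complex.exp (-t) := by
    intro t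
    rw [← Complex.exp_add]
    congr 1
    field_simp
    ring_nf
    simp
    ring
  set E : ℂ → ℝ → ℂ := fun y t => Complex.exp (-Complex.I * t * y / hbar) with hEdef
  have hzero : ∫ t : ℝ, ((-Complex.I * hbar) ^ N * (E y t * iteratedDeriv N φ t)
      + (∑ k ∈ Finset.Icc 2 (N - 2), (-1 : ℂ) ^ k * u k * (-Complex.I * hbar) ^ (N - k)
          * (E y t * iteratedDeriv (N - k) φ t))
      + ((Lam : ℂ) ^ N * (E (y - Complex.I * hbar) t * φ t)
        + (Lam : ℂ) ^ N * (E (y + Complex.I * hbar) t * φ t)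
        + (-1 : ℂ) ^ N * u N * (E y t * φ t))) = 0 := by
    rw [← integral_zero ℝ ℂ]
    congr 1
    ext t
    have h := hoper t (by simpa using hδ0)
    have h' := congrArg (fun z => E y t * z) h
    simp only [mul_zero, mul_add, Finset.mul_sum, add_mul] at h'
    rw [← h']
    simp only [hEdef, hp, hm]
    congr 1
    · congr 1
      · ring
      · apply Finset.sum_congr rfl
        intro k _
        ring
    · ring
  have i1 : Integrable (fun t : ℝ => (-Complex.I * hbar) ^ N * (E y t * iteratedDeriv N φ t)) :=
    (hI N y).const_mul _
  have i2 : ∀ k ∈ Finset.Icc 2 (N - 2), Integrable (fun t : ℝ =>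
      (-1 : ℂ) ^ k * u k * (-Complex.I * hbar) ^ (N - k) * (E y t * iteratedDeriv (N - k) φ t)) :=
    fun k _ => (hI (N - k) y).const_mul _
  have i3 : Integrable (fun t : ℝ => (Lam : ℂ) ^ N * (E (y - Complex.I * hbar) t * φ t)) := (hI0 (y - Complex.I * hbar)).const_mul ((Lam : ℂ) ^ N)
  have i4 : Integrable (fun t : ℝ => (Lam : ℂ) ^ N * (E (y + Complex.I * hbar) t * φ t)) := (hI0 (y + Complex.I * hbar)).const_mul ((Lam : ℂ) ^ N)
  have i5 : Integrable (fun t : ℝ => (-1 : ℂ) ^ N * u N * (E y t * φ t)) := (hI0 y).const_mul ((-1 : ℂ) ^ N * u N)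
  have i2' := integrable_finsetSum _ i2
  rw [integral_add (i1.fun_add i2') ((i3.fun_add i4).fun_add i5), integral_add i1 i2',
    integral_add (i3.fun_add i4) i5, integral_add i3 i4, integral_finsetSum _ i2] at hzero
  simp only [integral_const_mul] at hzero
  have hs : ∀ k ∈ Finset.Icc 2 (N - 2), (-1 : ℂ) ^ k * u k * (-Complex.I * hbar) ^ (N - k) *
      (∫ t : ℝ, E y t * iteratedDeriv (N - k) φ t)
      = (-1 : ℂ) ^ k * u k * y ^ (N - k) * ∫ t : ℝ, E y t * φ t := by
    intro k _
    rw [mul_assoc, hJ (N - k) y, mul_assoc _ (y ^ (N - k))]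
  rw [Finset.sum_congr rfl hs, ← Finset.sum_mul, hJ N y] at hzero
  rw [hψ, hψ, hψ]
  have := congrArg (fun z => (((Real.sqrt (2 * Real.pi * hbar))⁻¹ : ℝ) : ℂ) * z) hzero
  simp only [hEdef] at this
  linear_combination this
end

section
/- Let N ≥ 2 be an integer, ℏ > 0 and Λ > 0 real numbers, and u_2,…,u_N ∈ ℂ. Let ψ : ℂ → ℂ be entire and satisfy the difference equation Λ^N (ψ(y+iℏ) + ψ(y−iℏ)) + V_N(y) ψ(y) = (−1)^{N+1} u_N ψ(y) for all y ∈ ℂ, where V_N(y) = y^N + ∑_{k=2}^{N−2} (−1)^k u_k y^{N−k}. Assume: (i) for every α ∈ [−2ℏ, 2ℏ] the function t ↦ ψ(t + iα) belongs to L¹(ℝ), with L¹ norms bounded uniformly in α; (ii) ψ is bounded on the closed strip {|Im y| ≤ 2ℏ}; (iii) |ψ(t + iα)| → 0 as |t| → ∞ uniformly for α ∈ [−2ℏ, 2ℏ]. Then the function φ(x) = (2πℏ)^{−1/2} ∫_ℝ e^{ixy/ℏ} ψ(y) dy is N times continuously differentiable on ℝ and satisfies the oper equation (−iℏ)^N φ^{(N)}(x)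 + ∑_{k=2}^{N−2} (−1)^k u_k (−iℏ)^{N−k} φ^{(N−k)}(x) + (Λ^N e^{−x} + Λ^N e^{x} + (−1)^N u_N) φ(x) = 0 for every x ∈ ℝ. -/
open Finset MeasureTheory
open Filter Topology

theorem shift_aux (F : ℂ → ℂ) (hF : Differentiable ℂ F) (α : ℝ)
    (h0 : Integrable (fun t : ℝ => F t)) (h1 : Integrable (fun t : ℝ => F (t + α * Complex.I)))
    (hd : ∀ ε : ℝ, 0 < ε → ∃ R : ℝ, ∀ t : ℝ, R ≤ |t| →
      ∀ s : ℝ, |s| ≤ |α| → ‖F (t + s * Complex.I)‖ ≤ ε) :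
    ∫ t : ℝ, F (t + α * Complex.I) = ∫ t : ℝ, F t := by
  have key : ∀ T : ℝ, (∫ x in (-T)..T, F x) - (∫ x in (-T)..T, F (x + α * Complex.I))
      = Complex.I * (∫ y in (0:ℝ)..α, F (((-T : ℝ) : ℂ) + y * Complex.I))
        - Complex.I * (∫ y in (0:ℝ)..α, F ((T : ℂ) + y * Complex.I)) := by
    intro T
    have := Complex.integral_boundary_rect_eq_zero_of_differentiableOn F (((-T : ℝ) : ℂ))
      ((T : ℂ) + α * Complex.I) hF.differentiableOn
    simp at this
    push_cast
    linear_combination this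
  have hside : ∀ σ : ℝ, |σ| = 1 →
      Tendsto (fun T : ℝ => ∫ y in (0:ℝ)..α, F (((σ * T : ℝ) : ℂ) + y * Complex.I)) atTop (𝓝 0) := by
    intro σ hσ
    rw [Metric.tendsto_atTop]
    intro ε hε
    obtain ⟨R, hR⟩ := hd (ε / (|α| + 1)) (by positivity)
    refine ⟨R, fun T hT => ?_⟩
    rw [dist_zero_right]
    have hb := intervalIntegral.norm_integral_le_of_norm_le_const (a := (0:ℝ)) (b := α)
      (f := fun y : ℝ => F (((σ * T : ℝ) : ℂ) + y * Complex.I)) (C := ε / (|α| + 1)) (by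
        intro y hy
        apply hR
        · rw [abs_mul, hσ, one_mul]; exact hT.le.trans (le_abs_self T)
        · have := Set.abs_sub_left_of_mem_uIcc (Set.uIoc_subset_uIcc hy)
          simpa using this)
    refine hb.trans_lt ?_
    rw [sub_zero, div_mul_eq_mul_div, div_lt_iff₀ (by positivity)]
    nlinarith
  have t0 := intervalIntegral_tendsto_integral h0 tendsto_neg_atTop_atBot tendsto_id
  have t1 := intervalIntegral_tendsto_integral h1 tendsto_neg_atTop_atBot tendsto_id
  have s1 := (hside (-1) (by simp)).const_mul Complex.I
  have s2 := (hside 1 (by simp)).const_mul Complex.I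
  have e := tendsto_nhds_unique (t0.sub t1) ((s1.sub s2).congr (fun T => by
    simpa using (key T).symm))
  simp at e
  exact (sub_eq_zero.mp e).symm

theorem poly_aux (N : ℕ) (a : ℕ → ℂ) :
    ∃ C : ℝ, ∀ t : ℝ, |t| ^ N ≤
      2 * ‖(t : ℂ) ^ N + ∑ k ∈ Finset.Icc 2 (N - 2), a k * (t : ℂ) ^ (N - k)‖ + C := by
  set A : ℝ := ∑ k ∈ Finset.Icc 2 (N - 2), ‖a k‖ with hA
  have hA0 : 0 ≤ A := Finset.sum_nonneg fun _ _ => norm_nonneg _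
  set M : ℝ := 1 + 2 * A with hM
  have hM1 : 1 ≤ M := by linarith
  refine ⟨2 * (A * M ^ N), fun t => ?_⟩
  have hk : ∀ k ∈ Finset.Icc 2 (N - 2), ‖a k * (t : ℂ) ^ (N - k)‖ ≤
      ‖a k‖ * (M ^ N + |t| ^ N / M) := by
    intro k hk
    rw [Finset.mem_Icc] at hk
    rw [norm_mul, norm_pow, Complex.norm_real, Real.norm_eq_abs]
    gcongr
    rcases le_total |t| M with h | h
    · have h1 : |t| ^ (N - k) ≤ M ^ (N - k) := by gcongr
      have h2 : M ^ (N - k) ≤ M ^ N := pow_le_pow_right₀ hM1 (by omega)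
      have : 0 ≤ |t| ^ N / M := by positivity
      linarith
    · have h1 : |t| ^ (N - k) ≤ |t| ^ (N - 1) := pow_le_pow_right₀ (hM1.trans h) (by omega)
      have h2 : |t| ^ (N - 1) ≤ |t| ^ N / M := by
        rw [le_div_iff₀ (by linarith)]
        calc |t| ^ (N - 1) * M ≤ |t| ^ (N - 1) * |t| := by gcongr
          _ = |t| ^ N := by rw [← pow_succ]; congr 1; omega
      have : 0 ≤ M ^ N := by positivity
      linarith
  have hs : ‖∑ k ∈ Finset.Icc 2 (N - 2), a k * (t : ℂ) ^ (N - k)‖ ≤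
      A * (M ^ N + |t| ^ N / M) := by
    rw [hA, Finset.sum_mul]
    exact norm_sum_le_of_le _ hk
  have hAM : A * (|t| ^ N / M) ≤ |t| ^ N / 2 := by
    have : 0 ≤ |t| ^ N := by positivity
    rw [mul_div_assoc', div_le_div_iff₀ (by linarith) (by norm_num)]
    nlinarith
  have hn : ‖(t : ℂ) ^ N‖ = |t| ^ N := by simp
  have htri := norm_sub_norm_le ((t : ℂ) ^ N) (-∑ k ∈ Finset.Icc 2 (N - 2), a k * (t : ℂ) ^ (N - k))
  rw [norm_neg, sub_neg_eq_add, hn] at htri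
  nlinarith

theorem deriv_aux (N : ℕ) (h : ℝ) (hh : 0 < h) (c : ℂ) (f : ℝ → ℂ)
    (hf : ∀ n : ℕ, n ≤ N → Integrable (fun t : ℝ => (t : ℂ) ^ n * f t)) (φ : ℝ → ℂ)
    (hφ : ∀ x : ℝ, φ x = c * ∫ t : ℝ, Complex.exp (Complex.I * x * t / h) * f t) :
    ContDiff ℝ (N : ℕ∞) φ ∧ ∀ n : ℕ, n ≤ N → ∀ x : ℝ,
      (-Complex.I * h) ^ n * iteratedDeriv n φ x =
        c * ∫ t : ℝ, Complex.exp (Complex.I * x * t / h) * ((t : ℂ) ^ n * f t) := by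
  have hhc : (h : ℂ) ≠ 0 := by exact_mod_cast hh.ne'
  have hpi : (Real.pi : ℂ) ≠ 0 := by exact_mod_cast Real.pi_ne_zero
  set b : ℝ := -(2 * Real.pi * h)⁻¹ with hb
  have hexp : ∀ (g : ℝ → ℂ) (x : ℝ), FourierTransform.fourier g (b * x) =
      ∫ t : ℝ, Complex.exp (Complex.I * x * t / h) * g t := by
    intro g x
    rw [Real.fourier_real_eq_integral_exp_smul]
    congr 1
    ext t
    rw [smul_eq_mul]
    congr 2
    rw [hb]
    push_cast
    field_simp
  have hφ' : φ = fun x => c * FourierTransform.fourier f (b * x) := by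
    ext x; rw [hφ, hexp]
  have hf' : ∀ n : ℕ, (n : ℕ∞) ≤ (N : ℕ∞) → Integrable (fun t : ℝ => t ^ n • f t) := by
    intro n hn
    refine (hf n (by exact_mod_cast hn)).congr (Eventually.of_forall fun t => ?_)
    simp
  have hcd : ContDiff ℝ (N : ℕ∞) (FourierTransform.fourier f) := by
    apply Real.contDiff_fourier
    intro n hn
    convert! (hf' n hn).norm with x
    simp [norm_smul]
  refine ⟨?_, ?_⟩
  · rw [hφ']
    exact contDiff_const.mul (hcd.comp (contDiff_const.mul contDiff_id))
  · intro n hn x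
    have hcn : ContDiff ℝ n (FourierTransform.fourier f) := hcd.of_le (by exact_mod_cast hn)
    rw [hφ', iteratedDeriv_const_mul_field]
    have := congrFun (iteratedDeriv_comp_const_smul hcn b) x
    replace this : iteratedDeriv n (fun x => FourierTransform.fourier f (b * x)) x =
        b ^ n • iteratedDeriv n (FourierTransform.fourier f) (b * x) := this
    rw [this, Real.iteratedDeriv_fourier hf' (by exact_mod_cast hn), hexp, Complex.real_smul,
      mul_left_comm _ c, ← mul_assoc ((-Complex.I * (h : ℂ)) ^ n), ← integral_const_mul]
    congr 2
    · ext t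
      rw [smul_eq_mul]
      have : (1 : ℂ) = (-Complex.I * h) ^ n * ((b ^ n : ℝ) : ℂ) * (-2 * Real.pi * Complex.I) ^ n := by
        rw [hb]; push_cast
        rw [← mul_pow, ← mul_pow]
        rw [show -Complex.I * (h : ℂ) * -(2 * (Real.pi : ℂ) * h)⁻¹ * (-2 * Real.pi * Complex.I) = 1 by
          field_simp; simp]
        simp
      rw [mul_pow]
      linear_combination (-Complex.exp (Complex.I * x * t / h) * ((t : ℂ) ^ n * f t)) * this

theorem inverse_fourier_of_baxter_solution_satisfies_oper
    (N : ℕ) (hN : 2 ≤ N) (hbar Lam : ℝ) (hhbar : 0 < hbar) (hLam : 0 < Lam)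
    (u : ℕ → ℂ) (ψ : ℂ → ℂ) (hent : Differentiable ℂ ψ)
    (hbax : ∀ y : ℂ,
      (Lam : ℂ) ^ N * (ψ (y + Complex.I * hbar) + ψ (y - Complex.I * hbar))
        + (y ^ N + ∑ k ∈ Finset.Icc 2 (N - 2), (-1 : ℂ) ^ k * u k * y ^ (N - k)) * ψ y
        = (-1 : ℂ) ^ (N + 1) * u N * ψ y)
    (B : ℝ)
    (hL1 : ∀ α : ℝ, |α| ≤ 2 * hbar →
      Integrable (fun t : ℝ => ψ (t + α * Complex.I)) ∧
      (∫ t : ℝ, ‖ψ (t + α * Complex.I)‖) ≤ B)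
    (B' : ℝ) (hbdd : ∀ y : ℂ, |y.im| ≤ 2 * hbar → ‖ψ y‖ ≤ B')
    (hdecay : ∀ ε : ℝ, 0 < ε → ∃ R : ℝ, ∀ t : ℝ, R ≤ |t| →
      ∀ α : ℝ, |α| ≤ 2 * hbar → ‖ψ (t + α * Complex.I)‖ ≤ ε)
    (φ : ℝ → ℂ)
    (hφ : ∀ x : ℝ, φ x = (Real.sqrt (2 * Real.pi * hbar))⁻¹ *
        ∫ t : ℝ, Complex.exp (Complex.I * x * t / hbar) * ψ t) :
    ContDiff ℝ (N : ℕ∞) φ ∧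
    ∀ x : ℝ,
      (-Complex.I * hbar) ^ N * iteratedDeriv N φ x
        + (∑ k ∈ Finset.Icc 2 (N - 2),
            (-1 : ℂ) ^ k * u k * (-Complex.I * hbar) ^ (N - k) * iteratedDeriv (N - k) φ x)
        + ((Lam : ℂ) ^ N * Complex.exp (-(x : ℂ)) + (Lam : ℂ) ^ N * Complex.exp (x : ℂ)
            + (-1 : ℂ) ^ N * u N) * φ x = 0 := by
  have hhc : (hbar : ℂ) ≠ 0 := by exact_mod_cast hhbar.ne'
  have i0 : Integrable (fun t : ℝ => ψ t) := by
    simpa using (hL1 0 (by simp; linarith)).1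
  have ip : Integrable (fun t : ℝ => ψ (t + hbar * Complex.I)) :=
    (hL1 hbar (by rw [abs_of_pos hhbar]; linarith)).1
  have im : Integrable (fun t : ℝ => ψ (t + ((-hbar : ℝ) : ℂ) * Complex.I)) :=
    (hL1 (-hbar) (by rw [abs_neg, abs_of_pos hhbar]; linarith)).1
  have hcont : Continuous fun t : ℝ => ψ t := hent.continuous.comp Complex.continuous_ofReal
  -- Baxter equation on the real line
  have hb : ∀ t : ℝ, ((t : ℂ) ^ N + ∑ k ∈ Finset.Icc 2 (N - 2),
      (-1 : ℂ) ^ k * u k * (t : ℂ) ^ (N - k)) * ψ t =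
      -((-1 : ℂ) ^ N * u N * ψ t) - (Lam : ℂ) ^ N * (ψ (t + hbar * Complex.I)
        + ψ (t + ((-hbar : ℝ) : ℂ) * Complex.I)) := by
    intro t
    have h := hbax t
    rw [show (t : ℂ) + Complex.I * hbar = t + hbar * Complex.I by ring,
      show (t : ℂ) - Complex.I * hbar = t + ((-hbar : ℝ) : ℂ) * Complex.I by push_cast; ring,
      pow_succ] at h
    linear_combination h
  have iV : Integrable (fun t : ℝ => ((t : ℂ) ^ N + ∑ k ∈ Finset.Icc 2 (N - 2),
      (-1 : ℂ) ^ k * u k * (t : ℂ) ^ (N - k)) * ψ t) := by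
    simp_rw [hb]
    exact (i0.const_mul _).neg.sub ((ip.add im).const_mul _)
  obtain ⟨C, hC⟩ := poly_aux N (fun k => (-1 : ℂ) ^ k * u k)
  have iN : ∀ n : ℕ, n ≤ N → Integrable (fun t : ℝ => (t : ℂ) ^ n * ψ t) := by
    intro n hn
    refine Integrable.mono' ((iV.norm.const_mul 2).add (i0.norm.const_mul (C + 1))) ?_ ?_
    · exact ((Complex.continuous_ofReal.pow n).mul hcont).aestronglyMeasurable
    · refine Eventually.of_forall fun t => ?_
      simp only [Pi.add_apply, norm_mul, norm_pow, Complex.norm_real, Real.norm_eq_abs]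
      have h1 : |t| ^ n ≤ 1 + |t| ^ N := by
        rcases le_total |t| 1 with h | h
        · have := pow_le_one₀ (n := n) (abs_nonneg t) h
          have : 0 ≤ |t| ^ N := by positivity
          linarith
        · have := pow_le_pow_right₀ h hn
          linarith
      have h2 := hC t
      have h3 := mul_le_mul_of_nonneg_right (h1.trans (add_le_add_right h2 1)) (norm_nonneg (ψ t))
      linarith
  obtain ⟨hcd, hder⟩ := deriv_aux N hbar hhbar _ (fun t => ψ t) iN φ hφ
  refine ⟨hcd, fun x => ?_⟩
  -- multiplication by the exponential preserves integrability
  have iE : ∀ g : ℝ → ℂ, Integrable g →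
      Integrable (fun t : ℝ => Complex.exp (Complex.I * x * t / hbar) * g t) := by
    intro g hg
    refine hg.bdd_mul (c := 1) (by fun_prop) (Eventually.of_forall fun t => ?_)
    rw [Complex.norm_exp]
    simp [Complex.div_re]
  -- contour shift
  have hshift : ∀ α : ℝ, |α| ≤ 2 * hbar →
      ∫ t : ℝ, Complex.exp (Complex.I * x * t / hbar) * ψ (t + α * Complex.I) =
      Complex.exp (x * α / hbar) * ∫ t : ℝ, Complex.exp (Complex.I * x * t / hbar) * ψ t := by
    intro α hα
    have hrw : ∀ t s : ℝ, Complex.exp (Complex.I * x * (t + s * Complex.I) / hbar) =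
        Complex.exp (-(x * s / hbar)) * Complex.exp (Complex.I * x * t / hbar) := by
      intro t s
      rw [← Complex.exp_add]
      congr 1
      linear_combination (x * s / hbar : ℂ) * Complex.I_mul_I
    have h := shift_aux (fun z => Complex.exp (Complex.I * x * z / hbar) * ψ z)
      (by fun_prop) α (iE _ i0) (by
        refine ((iE _ (hL1 α hα).1).const_mul (Complex.exp (-(x * α / hbar)))).congr
          (Eventually.of_forall fun t => ?_)
        simp only [hrw]
        ring) (by
        intro ε hε
        obtain ⟨R, hR⟩ := hdecay (ε / Real.exp (|x| * 2)) (by positivity)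
        refine ⟨R, fun t ht s hs => ?_⟩
        have h1 := hR t ht s (hs.trans hα)
        rw [le_div_iff₀ (by positivity)] at h1
        rw [norm_mul, mul_comm]
        refine le_trans ?_ h1
        gcongr
        rw [hrw, norm_mul, Complex.norm_exp, Complex.norm_exp,
          show (Complex.I * x * t / hbar : ℂ).re = 0 by simp [Complex.div_re], Real.exp_zero, mul_one,
          Real.exp_le_exp, show (-(x * s / hbar : ℂ)).re = -(x * s / hbar) by
            rw [← Complex.ofReal_mul, ← Complex.ofReal_div, ← Complex.ofReal_neg, Complex.ofReal_re]]
        refine (neg_le_abs _).trans ?_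
        rw [abs_div, abs_mul, abs_of_pos hhbar, div_le_iff₀ hhbar]
        have := mul_le_mul_of_nonneg_left (hs.trans hα) (abs_nonneg x)
        linarith)
    rw [← h, ← integral_const_mul]
    congr 1
    ext t
    rw [hrw, ← mul_assoc, ← mul_assoc, ← Complex.exp_add]
    simp
  have hp := hshift hbar (by rw [abs_of_pos hhbar]; linarith)
  have hm := hshift (-hbar) (by rw [abs_neg, abs_of_pos hhbar]; linarith)
  rw [mul_div_cancel_right₀ _ hhc] at hp
  rw [show (x * ((-hbar : ℝ) : ℂ) / hbar : ℂ) = -x by push_cast; field_simp] at hm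
  -- integrate the Baxter equation
  have hint : (∫ t : ℝ, Complex.exp (Complex.I * x * t / hbar) * ((t : ℂ) ^ N * ψ t))
      + ∑ k ∈ Finset.Icc 2 (N - 2), (-1 : ℂ) ^ k * u k *
          ∫ t : ℝ, Complex.exp (Complex.I * x * t / hbar) * ((t : ℂ) ^ (N - k) * ψ t)
      = -((-1 : ℂ) ^ N * u N * ∫ t : ℝ, Complex.exp (Complex.I * x * t / hbar) * ψ t)
        - (Lam : ℂ) ^ N *
          ((∫ t : ℝ, Complex.exp (Complex.I * x * t / hbar) * ψ (t + hbar * Complex.I))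
          + ∫ t : ℝ, Complex.exp (Complex.I * x * t / hbar) *
              ψ (t + ((-hbar : ℝ) : ℂ) * Complex.I)) := by
    have j0 : Integrable (fun t : ℝ => -((-1 : ℂ) ^ N * u N *
        (Complex.exp (Complex.I * x * t / hbar) * ψ t))) := ((iE _ i0).const_mul _).neg
    have j1 : Integrable (fun t : ℝ => (Lam : ℂ) ^ N *
        (Complex.exp (Complex.I * x * t / hbar) * ψ (t + hbar * Complex.I) +
          Complex.exp (Complex.I * x * t / hbar) * ψ (t + ((-hbar : ℝ) : ℂ) * Complex.I))) :=
      ((iE _ ip).add (iE _ im)).const_mul _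
    rw [← integral_add (iE _ ip) (iE _ im)]
    simp_rw [← integral_const_mul]
    rw [← integral_finsetSum _ (fun k _ => (iE _ (iN (N - k) (Nat.sub_le _ _))).const_mul _),
      ← integral_add (iE _ (iN N le_rfl)) (integrable_finsetSum _
        (fun k _ => (iE _ (iN (N - k) (Nat.sub_le _ _))).const_mul _)),
      ← integral_neg, ← integral_sub j0 j1]
    congr 1
    ext t
    have h := hb t
    rw [add_mul, Finset.sum_mul] at h
    have h2 : ∑ k ∈ Finset.Icc 2 (N - 2), (-1 : ℂ) ^ k * u k *
          (Complex.exp (Complex.I * x * t / hbar) * ((t : ℂ) ^ (N - k) * ψ t)) =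
        Complex.exp (Complex.I * x * t / hbar) *
          ∑ k ∈ Finset.Icc 2 (N - 2), (-1 : ℂ) ^ k * u k * (t : ℂ) ^ (N - k) * ψ t := by
      rw [Finset.mul_sum]
      exact Finset.sum_congr rfl fun k _ => by ring
    rw [h2]
    linear_combination Complex.exp (Complex.I * x * t / hbar) * h
  have hsum : ∑ k ∈ Finset.Icc 2 (N - 2),
      (-1 : ℂ) ^ k * u k * (-Complex.I * hbar) ^ (N - k) * iteratedDeriv (N - k) φ x =
      (((Real.sqrt (2 * Real.pi * hbar))⁻¹ : ℝ) : ℂ) * ∑ k ∈ Finset.Icc 2 (N - 2), (-1 : ℂ) ^ k * u k *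
          ∫ t : ℝ, Complex.exp (Complex.I * x * t / hbar) * ((t : ℂ) ^ (N - k) * ψ t) := by
    rw [Finset.mul_sum]
    refine Finset.sum_congr rfl fun k _ => ?_
    rw [mul_assoc, hder (N - k) (Nat.sub_le _ _) x]
    ring
  rw [hsum, hder N le_rfl x, hφ x]
  rw [hp, hm] at hint
  linear_combination (((Real.sqrt (2 * Real.pi * hbar))⁻¹ : ℝ) : ℂ) * hint
end
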